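/- For every prime p and every n ≥ 0, the elementary abelian group (ℤ/p) × (ℤ/p) admits no free continuous action on the sphere S^n: there is no group homomorphism from (ℤ/p) × (ℤ/p) to the homeomorphism group of S^n such that every non-identity element acts without fixed points. -/

import Mathlib

/-!
The proof is Smith theory with coefficients in a field `k` of characteristic `p`, carried out on
Alexander–Spanier cochains.

*Cohomology of spheres.* Cochains are functions on finite lists of points, taken modulo those that
vanish on all sufficiently small lists, with the usual alternating coboundary `d`. Uniformly
continuous maps act by pullback, homotopic maps are identified by the prism operator
(`cobd_of_homotopy`), and a Mayer–Vietoris argument (`cobd_glue`, `SphereLike.suspension`) shows by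
induction on the dimension that the reduced cohomology of `Sⁿ` vanishes except in degree `n`, where
it is at most one-dimensional (`sphereLike_sphere`). This upper bound is all that is used.

*Smith sequences.* Let `g` be an element of order `p` of a finite abelian group acting freely on a
compact metric space, and put `a = g - 1`, `b = 1 + g + ⋯ + g ^ (p - 1)`. Freeness gives a finite
cover by invariant open sets `A₀, …, Aₘ₋₁` over each of which the covering of the orbit space is
trivial (`exists_cover`). Multiplying cochains by the indicator function of a sheet, applied to the
first argument, produces the exactness `ker a = im b`, `ker b = im a` on cochains
(`liftProp_of_partition`), so there are connecting homomorphisms exchanging the cohomologies of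
`ker a` and `ker b`. If the ambient complex is acyclic above some degree, these are injective there;
since the indicator functions are locally constant on `Aⱼ`, applying a connecting homomorphism to a
class that vanishes on `A₀, …, Aⱼ₋₁` gives one that vanishes on `Aⱼ` as well, so after `m` steps
the class is zero. Hence `ker a` and `ker b` are acyclic above that degree too
(`smith_vanishing`).

*The contradiction.* Let `g`, `h` generate `(ℤ/p)²`. Starting from the constant class, the
connecting homomorphisms for `g`, performed among `h`-invariant cochains, are injective below
degree `n` and lead to an invariant cocycle `u` in degree `n` that is nonzero in the cohomology of
`ker a` (`exists_class`). By the vanishing above degree `n`, applied to `g` and then to `h` acting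
on `g`-invariant cochains, `u` is a double transfer `b' (b z)` of a cocycle `z`. But `h` acts
on the at most one-dimensional top cohomology by a scalar `c` with `c ^ p = 1`, so `c = 1` and the
transfer `b' z` is a coboundary `d s` (`transfer_top`). Thus `u = b (b' z) = d (b s)` is zero in the
cohomology of `ker a` (`algebraic_contradiction`).
-/

/-- The group of self-homeomorphisms of a topological space,
with `(f * g) x = f (g x)`. -/
instance homeomorphGroup {X : Type*} [TopologicalSpace X] : Group (X ≃ₜ X) where
  mul f g := g.trans f
  one := Homeomorph.refl X
  inv := Homeomorph.symm
  mul_assoc _ _ _ := Homeomorph.ext fun _ => rfl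
  one_mul _ := Homeomorph.ext fun _ => rfl
  mul_one _ := Homeomorph.ext fun _ => rfl
  inv_mul_cancel f := Homeomorph.ext fun x => f.symm_apply_apply x

namespace FreeAction

set_option linter.unusedSectionVars false

/-! ### Cochains near the diagonal -/

section Cochains

variable {k : Type*} [Field k] {X Y : Type*}

/-- The alternating coboundary, as a function of the list at which it is evaluated:
`(df)(x₀, …, xₘ) = ∑ᵢ (-1)ⁱ f(x₀, …, x̂ᵢ, …, xₘ)`. -/
def dAux : List X → (List X → k) → k
  | [], _ => 0
  | x :: l, f => f l - dAux l (fun m => f (x :: m))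

theorem dAux_add (l : List X) : ∀ f g : List X → k, dAux l (f + g) = dAux l f + dAux l g := by
  induction l with
  | nil => intro f g; simp [dAux]
  | cons x l ih =>
    intro f g
    have := ih (fun m => f (x :: m)) (fun m => g (x :: m))
    simp only [dAux, Pi.add_apply]
    rw [show (fun m => f (x :: m) + g (x :: m)) = (fun m => f (x :: m)) + fun m => g (x :: m)
      from rfl, this]
    ring

theorem dAux_smul (c : k) (l : List X) : ∀ f : List X → k, dAux l (c • f) = c * dAux l f := by
  induction l with
  | nil => intro f; simp [dAux]
  | cons x l ih =>
    intro f
    have := ih (fun m => f (x :: m))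
    simp only [dAux, Pi.smul_apply]
    rw [show (fun m => c • f (x :: m)) = c • (fun m => f (x :: m)) from rfl, this, smul_eq_mul]
    ring

/-- The coboundary on functions of lists. Functions on lists of all lengths are treated at once;
the value of `d f` at a list of length `ℓ + 1` only depends on `f` at lists of length `ℓ`. -/
def d : (List X → k) →ₗ[k] (List X → k) where
  toFun f l := dAux l f
  map_add' f g := by ext l; exact dAux_add l f g
  map_smul' c f := by ext l; exact dAux_smul c l f

@[simp] theorem d_nil (f : List X → k) : d f [] = 0 := rfl

theorem d_cons (f : List X → k) (x : X) (l : List X) :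
    d f (x :: l) = f l - d (fun m => f (x :: m)) l := rfl

theorem d_d (l : List X) : ∀ f : List X → k, d (d f) l = 0 := by
  induction l with
  | nil => intro f; rfl
  | cons x l ih =>
    intro f
    have h : (fun m => d f (x :: m)) = f - d (fun m => f (x :: m)) := by
      ext m; simp [d_cons]
    rw [d_cons, h, map_sub, Pi.sub_apply, ih]
    ring

theorem d_comp_d (f : List X → k) : d (d f) = 0 := funext fun l => d_d l f

/-- `d f l` only involves `f` at the lists obtained from `l` by deleting one entry. -/
theorem d_local (l : List X) : ∀ f : List X → k,
    (∀ m : List X, m ⊆ l → m.length + 1 = l.length → f m = 0) → d f l = 0 := by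
  induction l with
  | nil => intro f _; rfl
  | cons x l ih =>
    intro f hf
    rw [d_cons, hf l (List.subset_cons_self x l) rfl, ih, sub_zero]
    intro m hm hlen
    exact hf (x :: m) (List.cons_subset_cons x hm) (by simp [hlen])

/-- Pullback of cochains along a map of points. -/
def pull (φ : X → Y) : (List Y → k) →ₗ[k] (List X → k) where
  toFun f l := f (l.map φ)
  map_add' _ _ := rfl
  map_smul' _ _ := rfl

@[simp] theorem pull_apply (φ : X → Y) (f : List Y → k) (l : List X) :
    pull φ f l = f (l.map φ) := rfl

theorem d_pull (φ : X → Y) (l : List X) : ∀ f : List Y → k, d (pull φ f) l = d f (l.map φ) := by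
  induction l with
  | nil => intro f; rfl
  | cons x l ih =>
    intro f
    rw [d_cons, List.map_cons, d_cons, ← ih]
    rfl

theorem d_pull' (φ : X → Y) (f : List Y → k) : d (pull φ f) = pull φ (d f) :=
  funext fun l => d_pull φ l f

theorem pull_id (f : List X → k) : pull id f = f := by
  ext l; simp

/-- The prism operator between two maps `φ, ψ`:
`(x₀, …, xₘ) ↦ ∑ᵢ (-1)ⁱ f(φ x₀, …, φ xᵢ, ψ xᵢ, …, ψ xₘ)`. -/
def prismAux (φ ψ : X → Y) : List X → (List Y → k) → k
  | [], _ => 0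
  | x :: l, f => f (φ x :: ψ x :: l.map ψ) - prismAux φ ψ l (fun m => f (φ x :: m))

theorem prismAux_sub (φ ψ : X → Y) (l : List X) : ∀ f g : List Y → k,
    prismAux φ ψ l (f - g) = prismAux φ ψ l f - prismAux φ ψ l g := by
  induction l with
  | nil => intro f g; simp [prismAux]
  | cons x l ih =>
    intro f g
    have := ih (fun m => f (φ x :: m)) (fun m => g (φ x :: m))
    simp only [prismAux, Pi.sub_apply]
    rw [show (fun m => f (φ x :: m) - g (φ x :: m)) =
      (fun m => f (φ x :: m)) - fun m => g (φ x :: m) from rfl, this]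
    ring

/-- The prism operator as a map of cochains. -/
def prism (φ ψ : X → Y) (f : List Y → k) : List X → k := fun l => prismAux φ ψ l f

theorem prism_cons (φ ψ : X → Y) (f : List Y → k) (x : X) (l : List X) :
    prism φ ψ f (x :: l) =
      f (φ x :: ψ x :: l.map ψ) - prism φ ψ (fun m => f (φ x :: m)) l := rfl

/-- The prism operator is a cochain homotopy between the two pullbacks. -/
theorem d_prism (φ ψ : X → Y) (l : List X) : ∀ f : List Y → k,
    d (prism φ ψ f) l + prism φ ψ (d f) l = f (l.map ψ) - f (l.map φ) := by
  induction l with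
  | nil => intro f; simp [prism, prismAux]
  | cons x l ih =>
    intro f
    have h1 : (fun m => prism φ ψ f (x :: m)) =
        pull ψ (fun m => f (φ x :: ψ x :: m)) - prism φ ψ (fun m => f (φ x :: m)) := by
      ext m; simp [prism_cons]
    have h2 : (fun m => d f (φ x :: m)) = f - d (fun m => f (φ x :: m)) := by
      ext m; simp [d_cons]
    have h3 := ih (fun m => f (φ x :: m))
    have h4 : prism φ ψ (f - d (fun m => f (φ x :: m))) l =
        prism φ ψ f l - prism φ ψ (d (fun m => f (φ x :: m))) l := prismAux_sub φ ψ l _ _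
    rw [d_cons, h1, map_sub, Pi.sub_apply, d_pull, prism_cons, h2, h4, d_cons, d_cons,
      List.map_cons, List.map_cons]
    linear_combination h3

theorem prism_local (φ ψ : X → Y) (l : List X) : ∀ f : List Y → k,
    (∀ m : List Y, m ⊆ l.map φ ++ l.map ψ → m.length = l.length + 1 → f m = 0) →
      prism φ ψ f l = 0 := by
  induction l with
  | nil => intro f _; rfl
  | cons x l ih =>
    intro f hf
    rw [prism_cons, ih, hf, sub_zero]
    · intro y hy
      simp only [List.mem_cons] at hy
      simp only [List.map_cons, List.mem_append, List.mem_cons]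
      tauto
    · simp
    · intro m hm hlen
      refine hf _ ?_ (by simp [hlen])
      intro y hy
      rcases List.mem_cons.1 hy with rfl | hy
      · simp
      · have := hm hy
        simp only [List.mem_append] at this
        simp only [List.map_cons, List.mem_append, List.mem_cons]
        tauto

end Cochains

section Local

variable {k : Type*} [Field k] {X Y : Type*} [PseudoMetricSpace X] [PseudoMetricSpace Y]

/-- A list of points of `A` with all mutual distances less than `ε`: an ordered simplex, possibly
degenerate, of the Vietoris complex of `A` at scale `ε`. -/
def Small (A : Set X) (ε : ℝ) (l : List X) : Prop :=
  (∀ x ∈ l, x ∈ A) ∧ ∀ x ∈ l, ∀ y ∈ l, dist x y < ε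

theorem Small.mono {A B : Set X} {ε δ : ℝ} {l m : List X} (h : Small A ε l) (hm : m ⊆ l)
    (hAB : A ⊆ B) (hε : ε ≤ δ) : Small B δ m :=
  ⟨fun x hx => hAB (h.1 x (hm hx)), fun x hx y hy => (h.2 x (hm hx) y (hm hy)).trans_le hε⟩

variable (k) in
/-- The cochains of level `ℓ` (functions of `ℓ` points) on `A` that vanish near the diagonal.
The quotients by these submodules are the augmented Alexander–Spanier cochains of `A`, the level
`ℓ` being the degree plus one. -/
def O (A : Set X) (ℓ : ℕ) : Submodule k (List X → k) where
  carrier := {f | ∃ ε > 0, ∀ l, l.length = ℓ → Small A ε l → f l = 0}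
  zero_mem' := ⟨1, one_pos, fun _ _ _ => rfl⟩
  add_mem' := by
    rintro f g ⟨ε, hε, hf⟩ ⟨δ, hδ, hg⟩
    refine ⟨min ε δ, lt_min hε hδ, fun l hl hs => ?_⟩
    rw [Pi.add_apply, hf l hl (hs.mono (List.Subset.refl _) subset_rfl (min_le_left _ _)),
      hg l hl (hs.mono (List.Subset.refl _) subset_rfl (min_le_right _ _)), add_zero]
  smul_mem' := by
    rintro c f ⟨ε, hε, hf⟩
    refine ⟨ε, hε, fun l hl hs => ?_⟩
    rw [Pi.smul_apply, hf l hl hs, smul_zero]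

theorem mem_O {A : Set X} {ℓ : ℕ} {f : List X → k} :
    f ∈ O k A ℓ ↔ ∃ ε > 0, ∀ l, l.length = ℓ → Small A ε l → f l = 0 := Iff.rfl

theorem O_anti {A B : Set X} (h : A ⊆ B) {ℓ : ℕ} {f : List X → k} (hf : f ∈ O k B ℓ) :
    f ∈ O k A ℓ := by
  obtain ⟨ε, hε, hf⟩ := hf
  exact ⟨ε, hε, fun l hl hs => hf l hl (hs.mono (List.Subset.refl _) h le_rfl)⟩

theorem d_mem_O {A : Set X} {ℓ : ℕ} {f : List X → k} (hf : f ∈ O k A ℓ) :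
    d f ∈ O k A (ℓ + 1) := by
  obtain ⟨ε, hε, hf⟩ := hf
  refine ⟨ε, hε, fun l hl hs => d_local l f fun m hm hlen => hf m (by omega) ?_⟩
  exact hs.mono hm subset_rfl le_rfl

theorem pull_mem_O {A : Set X} {B : Set Y} {φ : X → Y} (hφ : Set.MapsTo φ A B)
    (hu : UniformContinuousOn φ A) {ℓ : ℕ} {f : List Y → k} (hf : f ∈ O k B ℓ) :
    pull φ f ∈ O k A ℓ := by
  obtain ⟨ε, hε, hf⟩ := hf
  obtain ⟨δ, hδ, h⟩ := Metric.uniformContinuousOn_iff.1 hu ε hε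
  refine ⟨δ, hδ, fun l hl hs => hf _ (by simpa using hl) ⟨?_, ?_⟩⟩
  · intro y hy
    obtain ⟨x, hx, rfl⟩ := List.mem_map.1 hy
    exact hφ (hs.1 x hx)
  · intro y hy y' hy'
    obtain ⟨x, hx, rfl⟩ := List.mem_map.1 hy
    obtain ⟨x', hx', rfl⟩ := List.mem_map.1 hy'
    exact h x (hs.1 x hx) x' (hs.1 x' hx') (hs.2 x hx x' hx')

/-- `f` is a cocycle of level `ℓ` on `A`, up to cochains that vanish near the diagonal. -/
def Cocyc (A : Set X) (ℓ : ℕ) (f : List X → k) : Prop := d f ∈ O k A (ℓ + 1)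

/-- `f` is a coboundary at level `ℓ` on `A`, up to cochains that vanish near the diagonal. At level
`0` only the class of zero is a coboundary, because `d g [] = 0`. -/
def Cobd (A : Set X) (ℓ : ℕ) (f : List X → k) : Prop := ∃ g, f - d g ∈ O k A ℓ

theorem Cocyc.pull {A : Set X} {B : Set Y} {φ : X → Y} (hφ : Set.MapsTo φ A B)
    (hu : UniformContinuousOn φ A) {ℓ : ℕ} {f : List Y → k} (hf : Cocyc B ℓ f) :
    Cocyc A ℓ (pull φ f) := by
  unfold Cocyc
  rw [d_pull']
  exact pull_mem_O hφ hu hf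

theorem Cobd.pull {A : Set X} {B : Set Y} {φ : X → Y} (hφ : Set.MapsTo φ A B)
    (hu : UniformContinuousOn φ A) {ℓ : ℕ} {f : List Y → k} (hf : Cobd B ℓ f) :
    Cobd A ℓ (pull φ f) := by
  obtain ⟨g, hg⟩ := hf
  refine ⟨FreeAction.pull φ g, ?_⟩
  rw [d_pull', ← map_sub]
  exact pull_mem_O hφ hu hg

theorem Cobd.add {A : Set X} {ℓ : ℕ} {f f' : List X → k} (h : Cobd A ℓ f) (h' : Cobd A ℓ f') :
    Cobd A ℓ (f + f') := by
  obtain ⟨g, hg⟩ := h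
  obtain ⟨g', hg'⟩ := h'
  refine ⟨g + g', ?_⟩
  rw [map_add, add_sub_add_comm]
  exact add_mem hg hg'

theorem Cobd.smul {A : Set X} {ℓ : ℕ} {f : List X → k} (c : k) (h : Cobd A ℓ f) :
    Cobd A ℓ (c • f) := by
  obtain ⟨g, hg⟩ := h
  refine ⟨c • g, ?_⟩
  rw [map_smul, ← smul_sub]
  exact Submodule.smul_mem _ _ hg

theorem Cobd.of_sub_mem {A : Set X} {ℓ : ℕ} {f f' : List X → k} (h : Cobd A ℓ f)
    (h' : f' - f ∈ O k A ℓ) : Cobd A ℓ f' := by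
  obtain ⟨g, hg⟩ := h
  refine ⟨g, ?_⟩
  have := add_mem h' hg
  rwa [sub_add_sub_cancel] at this

/-- One step of a homotopy: the pullbacks of a cocycle along two maps that are close on the scale
on which it is closed are cohomologous. -/
theorem cobd_of_close {A : Set X} {B : Set Y} {ℓ : ℕ} {f : List Y → k} {ε δ : ℝ} (hδ : 0 < δ)
    (hf : ∀ l, l.length = ℓ + 1 → Small B ε l → d f l = 0) {φ ψ : X → Y}
    (hφ : Set.MapsTo φ A B) (hψ : Set.MapsTo ψ A B)
    (h1 : ∀ x ∈ A, ∀ y ∈ A, dist x y < δ → dist (φ x) (φ y) < ε)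
    (h2 : ∀ x ∈ A, ∀ y ∈ A, dist x y < δ → dist (ψ x) (ψ y) < ε)
    (h3 : ∀ x ∈ A, ∀ y ∈ A, dist x y < δ → dist (φ x) (ψ y) < ε) :
    Cobd A ℓ (pull ψ f - pull φ f) := by
  refine ⟨prism φ ψ f, δ, hδ, fun l hl hs => ?_⟩
  have h := d_prism φ ψ l f
  have h0 : prism φ ψ (d f) l = 0 := by
    refine prism_local φ ψ l _ fun m hm hlen => hf m (by omega) ⟨fun y hy => ?_, ?_⟩
    · have := hm hy
      simp only [List.mem_append, List.mem_map] at this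
      rcases this with ⟨x, hx, rfl⟩ | ⟨x, hx, rfl⟩
      · exact hφ (hs.1 x hx)
      · exact hψ (hs.1 x hx)
    · intro y hy y' hy'
      have a := hm hy
      have b := hm hy'
      simp only [List.mem_append, List.mem_map] at a b
      rcases a with ⟨x, hx, rfl⟩ | ⟨x, hx, rfl⟩ <;> rcases b with ⟨x', hx', rfl⟩ | ⟨x', hx', rfl⟩
      · exact h1 x (hs.1 x hx) x' (hs.1 x' hx') (hs.2 x hx x' hx')
      · exact h3 x (hs.1 x hx) x' (hs.1 x' hx') (hs.2 x hx x' hx')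
      · rw [dist_comm]
        exact h3 x' (hs.1 x' hx') x (hs.1 x hx) (hs.2 x' hx' x hx)
      · exact h2 x (hs.1 x hx) x' (hs.1 x' hx') (hs.2 x hx x' hx')
  simp only [Pi.sub_apply, pull_apply]
  rw [← h, h0]
  ring

/-- Homotopy invariance: a uniformly continuous homotopy is cut into steps that are short on the
scale on which the cocycle is closed. -/
theorem cobd_of_homotopy {A : Set X} {B : Set Y} {ℓ : ℕ} {f : List Y → k} (hf : Cocyc B ℓ f)
    (H : ℝ → X → Y) (hH : ∀ s ∈ Set.Icc (0 : ℝ) 1, Set.MapsTo (H s) A B)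
    (hu : UniformContinuousOn (fun q : ℝ × X => H q.1 q.2) (Set.Icc 0 1 ×ˢ A)) :
    Cobd A ℓ (pull (H 1) f - pull (H 0) f) := by
  obtain ⟨ε, hε, hf⟩ := hf
  obtain ⟨δ, hδ, h⟩ := Metric.uniformContinuousOn_iff.1 hu ε hε
  obtain ⟨N, hN⟩ := exists_nat_one_div_lt hδ
  have hNpos : (0 : ℝ) < N + 1 := by positivity
  have hI : ∀ j : ℕ, j ≤ N + 1 → (j : ℝ) / (N + 1) ∈ Set.Icc (0 : ℝ) 1 := by
    intro j hj
    refine ⟨by positivity, ?_⟩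
    rw [div_le_one hNpos]
    exact_mod_cast hj
  have key : ∀ j : ℕ, j ≤ N + 1 →
      Cobd A ℓ (pull (H ((j : ℝ) / (N + 1))) f - pull (H 0) f) := by
    intro j
    induction j with
    | zero =>
      intro _
      refine ⟨0, ?_⟩
      simp [zero_mem]
    | succ j ih =>
      intro hj
      have ih := ih (by omega)
      have hstep : Cobd A ℓ (pull (H (((j + 1 : ℕ) : ℝ) / (N + 1))) f -
          pull (H ((j : ℝ) / (N + 1))) f) := by
        have close : ∀ s ∈ Set.Icc (0 : ℝ) 1, ∀ t ∈ Set.Icc (0 : ℝ) 1, dist s t < δ →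
            ∀ x ∈ A, ∀ y ∈ A, dist x y < δ → dist (H s x) (H t y) < ε := by
          intro s hs t ht hst x hx y hy hxy
          exact h (s, x) ⟨hs, hx⟩ (t, y) ⟨ht, hy⟩ (by
            rw [Prod.dist_eq]; exact max_lt hst hxy)
        have i1 := hI j (by omega)
        have i2 := hI (j + 1) hj
        refine cobd_of_close hδ hf (hH _ i1) (hH _ i2) (close _ i1 _ i1 (by simpa))
          (close _ i2 _ i2 (by simpa)) (close _ i1 _ i2 ?_)
        rw [Real.dist_eq, ← sub_div]
        push_cast
        rw [show (j : ℝ) - (j + 1) = -1 by ring, abs_div, abs_neg, abs_one, abs_of_pos hNpos]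
        exact hN
      have := hstep.add ih
      rwa [sub_add_sub_cancel] at this
  have := key (N + 1) le_rfl
  push_cast at this
  rwa [div_self hNpos.ne'] at this

/-- If `i ∘ r` is homotopic to the identity of `A`, then a cocycle on `A` is a coboundary as soon
as its pullback along `i` is one. -/
theorem cobd_of_retract {A : Set X} {B : Set Y} {ℓ : ℕ} {f : List X → k} (hf : Cocyc A ℓ f)
    {i : Y → X} {r : X → Y} (hr : Set.MapsTo r A B)
    (hru : UniformContinuousOn r A) (H : ℝ → X → X)
    (hH : ∀ s ∈ Set.Icc (0 : ℝ) 1, Set.MapsTo (H s) A A)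
    (hu : UniformContinuousOn (fun q : ℝ × X => H q.1 q.2) (Set.Icc 0 1 ×ˢ A))
    (h0 : ∀ x ∈ A, H 0 x = x) (h1 : ∀ x ∈ A, H 1 x = i (r x)) (hi : Cobd B ℓ (pull i f)) :
    Cobd A ℓ f := by
  have a := (cobd_of_homotopy hf H hH hu).smul (-1)
  have b := hi.pull hr hru
  refine (a.add b).of_sub_mem ⟨1, one_pos, fun l _ hs => ?_⟩
  have e0 : l.map (H 0) = l := by
    conv_rhs => rw [← List.map_id l]
    exact List.map_congr_left fun x hx => h0 x (hs.1 x hx)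
  have e1 : l.map (H 1) = (l.map r).map i := by
    rw [List.map_map]
    exact List.map_congr_left fun x hx => h1 x (hs.1 x hx)
  simp only [Pi.sub_apply, Pi.add_apply, Pi.smul_apply, pull_apply, e0, e1, smul_eq_mul]
  ring

theorem cobd_singleton (c : X) {ℓ : ℕ} {f : List X → k} (hf : Cocyc {c} ℓ f) :
    Cobd {c} ℓ f := by
  obtain ⟨ε, hε, hf⟩ := hf
  refine ⟨fun m => f (c :: m), ε, hε, fun l hl hs => ?_⟩
  have := hf (c :: l) (by simp [hl]) ⟨?_, ?_⟩
  · rwa [d_cons] at this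
  · intro x hx
    rcases List.mem_cons.1 hx with rfl | hx
    · rfl
    · exact hs.1 x hx
  · have key : ∀ x ∈ c :: l, x = c := by
      intro x hx
      rcases List.mem_cons.1 hx with rfl | hx
      · rfl
      · exact hs.1 x hx
    intro x hx y hy
    rw [key x hx, key y hy, dist_self]
    exact hε

/-- The Mayer–Vietoris gluing step. -/
theorem cobd_glue {A U V : Set X} {ε₀ : ℝ} (hε₀ : 0 < ε₀)
    (hcov : ∀ l, Small A ε₀ l → (∀ x ∈ l, x ∈ U) ∨ ∀ x ∈ l, x ∈ V) {ℓ : ℕ}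
    {f g g' : List X → k} (hg : f - d g ∈ O k U (ℓ + 1)) (hg' : f - d g' ∈ O k V (ℓ + 1))
    (h : Cobd (U ∩ V) ℓ (g - g')) : Cobd A (ℓ + 1) f := by
  classical
  obtain ⟨s, hs⟩ := h
  obtain ⟨ε₁, hε₁, h1⟩ := hg
  obtain ⟨ε₂, hε₂, h2⟩ := hg'
  obtain ⟨ε₃, hε₃, h3⟩ := hs
  refine ⟨fun l => if ∀ x ∈ l, x ∈ U then (g - d s) l else g' l,
    min (min ε₀ ε₁) (min ε₂ ε₃), by positivity, fun l hl hsm => ?_⟩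
  set G : List X → k := fun l => if ∀ x ∈ l, x ∈ U then (g - d s) l else g' l with hG
  have sm : ∀ {δ}, min (min ε₀ ε₁) (min ε₂ ε₃) ≤ δ → Small A δ l := fun h =>
    hsm.mono (List.Subset.refl _) subset_rfl h
  have e0 := sm (δ := ε₀) (by simp)
  have e1 := sm (δ := ε₁) (by simp)
  have e2 := sm (δ := ε₂) (by simp)
  have e3 := sm (δ := ε₃) (by simp)
  rw [Pi.sub_apply]
  rcases hcov l e0 with hl' | hl'
  · have a : d (G - (g - d s)) l = 0 := by
      refine d_local l _ fun m hm _ => ?_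
      rw [Pi.sub_apply, hG]
      simp only
      rw [if_pos fun x hx => hl' x (hm hx), sub_self]
    have b := h1 l hl ⟨hl', e1.2⟩
    rw [map_sub, map_sub, d_comp_d, sub_zero, Pi.sub_apply] at a
    rw [Pi.sub_apply] at b
    linear_combination b - a
  · have a : d (G - g') l = 0 := by
      refine d_local l _ fun m hm hlen => ?_
      rw [Pi.sub_apply, hG]
      simp only
      split_ifs with hU
      · have := h3 m (by omega) ⟨fun x hx => ⟨hU x hx, hl' x (hm hx)⟩,
          fun x hx y hy => e3.2 x (hm hx) y (hm hy)⟩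
        simp only [Pi.sub_apply] at this ⊢
        linear_combination this
      · simp
    have b := h2 l hl ⟨hl', e2.2⟩
    rw [map_sub, Pi.sub_apply] at a
    rw [Pi.sub_apply] at b
    linear_combination b - a

variable (k) in
/-- `A` has at most the reduced Alexander–Spanier cohomology of a sphere of dimension `D - 1`:
it vanishes in all levels other than `D`, and at level `D` any two classes are proportional. -/
def SphereLike (A : Set X) (D : ℕ) : Prop :=
  (∀ ℓ, ℓ ≠ D → ∀ f : List X → k, Cocyc A ℓ f → Cobd A ℓ f) ∧
  ∀ f f' : List X → k, Cocyc A D f → Cocyc A D f' → ¬ Cobd A D f' →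
    ∃ c : k, Cobd A D (f - c • f')

theorem SphereLike.of_retract {A : Set X} {B : Set Y} {D : ℕ} (hB : SphereLike k B D)
    {i : Y → X} {r : X → Y} (hi : Set.MapsTo i B A) (hiu : UniformContinuousOn i B)
    (hr : Set.MapsTo r A B)
    (hru : UniformContinuousOn r A) (H : ℝ → X → X)
    (hH : ∀ s ∈ Set.Icc (0 : ℝ) 1, Set.MapsTo (H s) A A)
    (hu : UniformContinuousOn (fun q : ℝ × X => H q.1 q.2) (Set.Icc 0 1 ×ˢ A))
    (h0 : ∀ x ∈ A, H 0 x = x) (h1 : ∀ x ∈ A, H 1 x = i (r x)) : SphereLike k A D := by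
  refine ⟨fun ℓ hℓ f hf => ?_, fun f f' hf hf' hn => ?_⟩
  · exact cobd_of_retract hf hr hru H hH hu h0 h1 (hB.1 ℓ hℓ _ (hf.pull hi hiu))
  · have hn' : ¬ Cobd B D (pull i f') := fun h =>
      hn (cobd_of_retract hf' hr hru H hH hu h0 h1 h)
    obtain ⟨c, hc⟩ := hB.2 _ _ (hf.pull hi hiu) (hf'.pull hi hiu) hn'
    refine ⟨c, cobd_of_retract (i := i) ?_ hr hru H hH hu h0 h1 ?_⟩
    · unfold Cocyc
      rw [map_sub, map_smul]
      exact sub_mem hf (Submodule.smul_mem _ _ hf')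
    · rwa [map_sub, map_smul]

/-- Gluing two acyclic sets along a set with the cohomology of a sphere. -/
theorem SphereLike.suspension {A U V : Set X} {D : ℕ} {ε₀ : ℝ} (hε₀ : 0 < ε₀)
    (hUA : U ⊆ A) (hVA : V ⊆ A)
    (hcov : ∀ l, Small A ε₀ l → (∀ x ∈ l, x ∈ U) ∨ ∀ x ∈ l, x ∈ V)
    (hU : ∀ ℓ, ∀ f : List X → k, Cocyc U ℓ f → Cobd U ℓ f)
    (hV : ∀ ℓ, ∀ f : List X → k, Cocyc V ℓ f → Cobd V ℓ f)
    (hW : SphereLike k (U ∩ V) D) : SphereLike k A (D + 1) := by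
  have diff : ∀ {ℓ} {f g g' : List X → k}, f - d g ∈ O k U (ℓ + 1) →
      f - d g' ∈ O k V (ℓ + 1) → Cocyc (U ∩ V) ℓ (g - g') := by
    intro ℓ f g g' hg hg'
    have := sub_mem (O_anti Set.inter_subset_right hg') (O_anti Set.inter_subset_left hg)
    rw [sub_sub_sub_cancel_left, ← map_sub] at this
    exact this
  refine ⟨fun ℓ hℓ f hf => ?_, fun f f' hf hf' hn => ?_⟩
  · obtain ⟨g, hg⟩ := hU ℓ f (O_anti hUA hf)
    obtain ⟨g', hg'⟩ := hV ℓ f (O_anti hVA hf)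
    cases ℓ with
    | zero =>
      refine ⟨g, ?_⟩
      obtain ⟨ε, hε, h⟩ := hg
      refine ⟨ε, hε, fun l hl _ => h l hl ?_⟩
      rw [List.length_eq_zero_iff.1 hl]
      exact ⟨by simp, by simp⟩
    | succ ℓ =>
      exact cobd_glue hε₀ hcov hg hg' (hW.1 ℓ (by omega) _ (diff hg hg'))
  · obtain ⟨g, hg⟩ := hU _ f (O_anti hUA hf)
    obtain ⟨g', hg'⟩ := hV _ f (O_anti hVA hf)
    obtain ⟨e, he⟩ := hU _ f' (O_anti hUA hf')
    obtain ⟨e', he'⟩ := hV _ f' (O_anti hVA hf')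
    have hn' : ¬ Cobd (U ∩ V) D (e - e') := fun h => hn (cobd_glue hε₀ hcov he he' h)
    obtain ⟨c, hc⟩ := hW.2 _ _ (diff hg hg') (diff he he') hn'
    refine ⟨c, cobd_glue (g := g - c • e) (g' := g' - c • e') hε₀ hcov ?_ ?_ ?_⟩
    · have := sub_mem hg (Submodule.smul_mem _ c he)
      rw [map_sub, map_smul]
      convert this using 1
      rw [smul_sub]
      abel
    · have := sub_mem hg' (Submodule.smul_mem _ c he')
      rw [map_sub, map_smul]
      convert this using 1
      rw [smul_sub]
      abel
    · convert hc using 1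
      rw [smul_sub]
      abel

theorem sphereLike_empty : SphereLike k (∅ : Set X) 0 := by
  refine ⟨fun ℓ hℓ f _ => ⟨0, 1, one_pos, fun l hl hs => ?_⟩, fun f f' _ _ hn => ?_⟩
  · obtain ⟨x, hx⟩ := List.exists_mem_of_length_pos (l := l) (by omega)
    exact (hs.1 x hx).elim
  · have h : f' [] ≠ 0 := fun h => hn ⟨0, 1, one_pos, fun l hl _ => by
      rw [List.length_eq_zero_iff.1 hl]; simp [h]⟩
    refine ⟨f [] / f' [], 0, 1, one_pos, fun l hl _ => ?_⟩
    rw [List.length_eq_zero_iff.1 hl]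
    simp [h]

end Local

/-! ### Cohomology of spheres -/

section Spheres

variable {k : Type*} [Field k] {F : Type*} [NormedAddCommGroup F] [NormedSpace ℝ F]
  [FiniteDimensional ℝ F]

/-- The part `-1/2 ≤ σ t` of the unit sphere of `ℝ × F`, a closed cap when `σ = ±1`. -/
def cap (F : Type*) [NormedAddCommGroup F] (σ : ℝ) : Set (ℝ × F) :=
  {z | ‖z‖ = 1 ∧ -(1 / 2) ≤ σ * z.1}

theorem isCompact_of_sub_sphere {A : Set (ℝ × F)} (hc : IsClosed A) (h : ∀ z ∈ A, ‖z‖ ≤ 1) :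
    IsCompact A := by
  have := FiniteDimensional.proper_real F
  refine (isCompact_closedBall (0 : ℝ × F) 1).of_isClosed_subset hc fun z hz => ?_
  simpa using h z hz

theorem isCompact_cap (σ : ℝ) : IsCompact (cap F σ) := by
  refine isCompact_of_sub_sphere ?_ fun z hz => hz.1.le
  exact (isClosed_eq continuous_norm continuous_const).inter
    (isClosed_le continuous_const (continuous_const.mul continuous_fst))

/-- Caps of the cube are acyclic: push the cap along the axis onto a face of the cube, and contract
this face linearly. -/
theorem cap_acyclic {σ : ℝ} (hσ : |σ| = 1) (ℓ : ℕ) (f : List (ℝ × F) → k)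
    (hf : Cocyc (cap F σ) ℓ f) : Cobd (cap F σ) ℓ f := by
  have hσ2 : σ * σ = 1 := by rw [← abs_mul_abs_self, hσ, one_mul]
  set T : Set (ℝ × F) := {z | z.1 = σ ∧ ‖z.2‖ ≤ 1} with hT
  have hTc : IsCompact T := by
    refine isCompact_of_sub_sphere ?_ fun z hz => ?_
    · exact (isClosed_eq continuous_fst continuous_const).inter
        (isClosed_le continuous_snd.norm continuous_const)
    · rw [Prod.norm_def, hz.1, Real.norm_eq_abs, hσ]
      exact max_le le_rfl hz.2
  have hTU : T ⊆ cap F σ := by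
    rintro z ⟨h1, h2⟩
    refine ⟨?_, ?_⟩
    · rw [Prod.norm_def, h1, Real.norm_eq_abs, hσ]
      exact max_eq_left h2
    · rw [h1, hσ2]; norm_num
  have hcT : {((σ, 0) : ℝ × F)} ⊆ T := by
    rintro z rfl
    simp [hT]
  have hr : Set.MapsTo (fun z : ℝ × F => (σ, z.2)) (cap F σ) T := by
    rintro z ⟨h1, -⟩
    refine ⟨rfl, ?_⟩
    rw [← h1, Prod.norm_def]
    exact le_max_right _ _
  have hI : IsCompact (Set.Icc (0 : ℝ) 1) := isCompact_Icc
  refine cobd_of_retract (B := T) (i := id) (r := fun z => (σ, z.2)) hf hr ?_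
    (fun s z => (z.1 + s * (σ - z.1), z.2)) ?_ ?_ ?_ ?_ ?_
  · exact (isCompact_cap σ).uniformContinuousOn_of_continuous (by fun_prop)
  · rintro s ⟨hs0, hs1⟩ z ⟨h1, h2⟩
    have hz1 : |z.1| ≤ 1 := by
      rw [← h1, Prod.norm_def]; exact le_max_left _ _
    have hle : |σ * z.1| ≤ 1 := by rw [abs_mul, hσ, one_mul]; exact hz1
    have e : σ * (z.1 + s * (σ - z.1)) = (1 - s) * (σ * z.1) + s := by
      linear_combination s * hσ2
    have hle2 := abs_le.1 hle
    refine ⟨?_, ?_⟩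
    · have habs : |z.1 + s * (σ - z.1)| ≤ 1 := by
        rw [← one_mul |_|, ← hσ, ← abs_mul, e, hσ, abs_le]
        constructor <;> nlinarith
      rw [Prod.norm_def, Real.norm_eq_abs] at h1 ⊢
      simp only
      rcases max_choice |z.1| ‖z.2‖ with hm | hm
      · -- Here `z` lies on one of the two faces `t = ±1`, hence on `t = σ`.
        rw [hm] at h1
        have hz : z.1 = σ := by
          have : |σ * z.1| = 1 := by rw [abs_mul, hσ, h1, one_mul]
          rcases (abs_eq zero_le_one).1 this with h | h
          · linear_combination σ * h - z.1 * hσ2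
          · linarith
        rw [hz, sub_self, mul_zero, add_zero, hσ]
        refine max_eq_left ?_
        rw [← h1, ← hm]
        exact le_max_right _ _
      · rw [hm] at h1
        rw [h1]
        exact max_eq_right habs
    · rw [e]; nlinarith
  · exact (hI.prod (isCompact_cap σ)).uniformContinuousOn_of_continuous (by fun_prop)
  · intro z _; simp
  · intro z _; simp
  rw [pull_id]
  have hfT : Cocyc T ℓ f := O_anti hTU hf
  refine cobd_of_retract (B := {((σ, 0) : ℝ × F)}) (i := id) (r := fun z => (σ, 0)) hfT
    (fun _ _ => rfl) ?_ (fun s z => (z.1, (1 - s) • z.2)) ?_ ?_ ?_ ?_ ?_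
  · exact hTc.uniformContinuousOn_of_continuous (by fun_prop)
  · rintro s ⟨hs0, hs1⟩ z ⟨h1, h2⟩
    refine ⟨h1, ?_⟩
    rw [norm_smul, Real.norm_eq_abs, abs_of_nonneg (by linarith)]
    exact mul_le_one₀ (by linarith) (norm_nonneg _) h2
  · exact (hI.prod hTc).uniformContinuousOn_of_continuous (by fun_prop)
  · intro z _; simp
  · rintro z ⟨h1, -⟩; simp [h1]
  rw [pull_id]
  exact cobd_singleton _ (O_anti hcT hfT)

/-- The unit sphere of `ℝ × F` is covered by two acyclic caps whose intersection retracts onto the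
unit sphere of `F`. -/
theorem SphereLike.prod {D : ℕ} (h : SphereLike k {x : F | ‖x‖ = 1} D) :
    SphereLike k {z : ℝ × F | ‖z‖ = 1} (D + 1) := by
  have hW : ∀ z ∈ cap F 1 ∩ cap F (-1), |z.1| ≤ 1 / 2 ∧ ‖z.2‖ = 1 := by
    rintro z ⟨⟨h1, h2⟩, -, h3⟩
    have h4 : |z.1| ≤ 1 / 2 := abs_le.2 ⟨by linarith, by linarith⟩
    refine ⟨h4, ?_⟩
    rw [Prod.norm_def, Real.norm_eq_abs] at h1
    rcases max_choice |z.1| ‖z.2‖ with hm | hm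
    · linarith
    · rw [← hm, h1]
  have hW' : ∀ z : ℝ × F, |z.1| ≤ 1 / 2 → ‖z.2‖ = 1 → z ∈ cap F 1 ∩ cap F (-1) := by
    intro z h1 h2
    have h3 : ‖z‖ = 1 := by
      rw [Prod.norm_def, h2, Real.norm_eq_abs]
      exact max_eq_right (by linarith)
    have h4 := abs_le.1 h1
    exact ⟨⟨h3, by linarith⟩, h3, by linarith⟩
  have hWc : IsCompact (cap F 1 ∩ cap F (-1)) :=
    (isCompact_cap 1).inter (isCompact_cap (-1))
  have := FiniteDimensional.proper_real F
  have hSc : IsCompact {x : F | ‖x‖ = 1} := by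
    refine (isCompact_closedBall (0 : F) 1).of_isClosed_subset
      (isClosed_eq continuous_norm continuous_const) fun z hz => ?_
    simpa using le_of_eq hz
  refine SphereLike.suspension (U := cap F 1) (V := cap F (-1)) one_pos (fun z hz => hz.1)
    (fun z hz => hz.1) ?_ (fun ℓ f hf => cap_acyclic (by simp) ℓ f hf)
    (fun ℓ f hf => cap_acyclic (by simp) ℓ f hf) ?_
  · intro l hl
    by_cases hx : ∀ x ∈ l, -(1 / 2) ≤ x.1
    · exact Or.inl fun x hxl => ⟨hl.1 x hxl, by linarith [hx x hxl]⟩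
    · push Not at hx
      obtain ⟨x, hxl, hx⟩ := hx
      refine Or.inr fun y hyl => ⟨hl.1 y hyl, ?_⟩
      have := (le_max_left _ _).trans_lt (hl.2 y hyl x hxl)
      rw [Real.dist_eq] at this
      linarith [(abs_lt.1 this).2]
  · refine h.of_retract (i := fun x => (0, x)) (r := fun z => z.2) ?_ ?_ (fun z hz => (hW z hz).2)
      ?_ (fun s z => ((1 - s) * z.1, z.2)) ?_ ?_ ?_ ?_
    · intro x hx; exact hW' _ (by simp) hx
    · exact hSc.uniformContinuousOn_of_continuous (by fun_prop)
    · exact hWc.uniformContinuousOn_of_continuous (by fun_prop)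
    · rintro s ⟨hs0, hs1⟩ z hz
      obtain ⟨h1, h2⟩ := hW z hz
      refine hW' _ ?_ h2
      rw [abs_mul, abs_of_nonneg (by linarith : (0 : ℝ) ≤ 1 - s)]
      nlinarith [abs_nonneg z.1]
    · exact (isCompact_Icc.prod hWc).uniformContinuousOn_of_continuous (by fun_prop)
    · intro z _; simp
    · intro z _; simp

variable (k) in
/-- The cube `{x : ‖x‖ = 1}` for a suitable norm on `ℝᴰ` (the maximum norm) is a sphere
cohomologically. -/
theorem exists_sphereLike (D : ℕ) : ∃ (F : Type) (_ : NormedAddCommGroup F)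
    (_ : NormedSpace ℝ F) (_ : FiniteDimensional ℝ F), Module.finrank ℝ F = D ∧
      SphereLike k {x : F | ‖x‖ = 1} D := by
  induction D with
  | zero =>
    refine ⟨Fin 0 → ℝ, inferInstance, inferInstance, inferInstance, by simp, ?_⟩
    have h : {x : Fin 0 → ℝ | ‖x‖ = 1} = ∅ := by
      refine Set.eq_empty_of_forall_notMem fun x hx => ?_
      have h1 : ‖x‖ = 1 := hx
      rw [Subsingleton.elim x 0, norm_zero] at h1
      exact zero_ne_one h1
    rw [h]
    exact sphereLike_empty
  | succ D ih =>
    obtain ⟨F, _, _, _, h1, h2⟩ := ih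
    exact ⟨ℝ × F, inferInstance, inferInstance, inferInstance,
      by simp [h1, add_comm], h2.prod⟩

variable (k) in
/-- The round sphere, compared with the cube by radial projection. -/
theorem sphereLike_sphere (n : ℕ) : SphereLike k
    (Set.univ : Set (Metric.sphere (0 : EuclideanSpace ℝ (Fin (n + 1))) 1)) (n + 1) := by
  classical
  obtain ⟨F, _, _, _, h1, h2⟩ := exists_sphereLike k (n + 1)
  let T : F ≃L[ℝ] EuclideanSpace ℝ (Fin (n + 1)) :=
    ContinuousLinearEquiv.ofFinrankEq (by simp [h1])
  have := FiniteDimensional.proper_real F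
  have hSc : IsCompact {x : F | ‖x‖ = 1} := by
    refine (isCompact_closedBall (0 : F) 1).of_isClosed_subset
      (isClosed_eq continuous_norm continuous_const) fun z hz => ?_
    simpa using le_of_eq hz
  have hT0 : ∀ x : F, ‖x‖ = 1 → ‖T x‖ ≠ 0 := by
    intro x hx h
    rw [norm_eq_zero, map_eq_zero_iff T T.injective] at h
    simp [h] at hx
  have hT0' : ∀ y : Metric.sphere (0 : EuclideanSpace ℝ (Fin (n + 1))) 1,
      ‖T.symm y‖ ≠ 0 := by
    intro y h
    rw [norm_eq_zero, map_eq_zero_iff T.symm T.symm.injective] at h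
    have := norm_eq_of_mem_sphere y
    simp [h] at this
  obtain ⟨y₀, hy₀⟩ : (Metric.sphere (0 : EuclideanSpace ℝ (Fin (n + 1))) 1).Nonempty :=
    NormedSpace.sphere_nonempty.2 zero_le_one
  let i : F → Metric.sphere (0 : EuclideanSpace ℝ (Fin (n + 1))) 1 := fun x =>
    if hx : ‖x‖ = 1 then ⟨‖T x‖⁻¹ • T x, by
      rw [mem_sphere_zero_iff_norm, norm_smul, norm_inv, norm_norm, inv_mul_cancel₀ (hT0 x hx)]⟩
    else ⟨y₀, hy₀⟩
  let r : Metric.sphere (0 : EuclideanSpace ℝ (Fin (n + 1))) 1 → F := fun y =>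
    ‖T.symm y‖⁻¹ • T.symm y
  have hr : ∀ y, ‖r y‖ = 1 := by
    intro y
    rw [norm_smul, norm_inv, norm_norm, inv_mul_cancel₀ (hT0' y)]
  have hic : ContinuousOn i {x : F | ‖x‖ = 1} := by
    rw [continuousOn_iff_continuous_domRestrict]
    refine Continuous.subtype_mk (f := fun x : {x : F | ‖x‖ = 1} => ‖T x‖⁻¹ • T x) ?_ ?_ |>.congr ?_
    · have hTc : Continuous fun x : {x : F | ‖x‖ = 1} => T x :=
        T.continuous.comp continuous_subtype_val
      exact Continuous.smul (hTc.norm.inv₀ fun x => hT0 x x.2) hTc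
    · intro x
      rw [mem_sphere_zero_iff_norm, norm_smul, norm_inv, norm_norm, inv_mul_cancel₀ (hT0 x x.2)]
    · rintro ⟨x, hx⟩
      have hx' : ‖x‖ = 1 := hx
      simp [i, hx']
  have hrc : Continuous r :=
    Continuous.smul (Continuous.inv₀ (by fun_prop) hT0') (by fun_prop)
  have hir : ∀ y, i (r y) = y := by
    intro y
    have hy : ‖(y : EuclideanSpace ℝ (Fin (n + 1)))‖ = 1 := norm_eq_of_mem_sphere y
    apply Subtype.ext
    simp only [i, hr y, dite_true]
    simp only [r, map_smul, ContinuousLinearEquiv.apply_symm_apply, norm_smul, hy, norm_inv,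
      norm_norm, mul_one, inv_inv, smul_smul]
    rw [mul_inv_cancel₀ (hT0' y), one_smul]
  refine h2.of_retract (i := i) (r := r) (Set.mapsTo_univ _ _)
    (hSc.uniformContinuousOn_of_continuous hic) (fun y _ => hr y)
    (isCompact_univ.uniformContinuousOn_of_continuous hrc.continuousOn) (fun _ y => y)
    (fun _ _ _ _ => trivial) ?_ (fun _ _ => rfl) (fun y _ => (hir y).symm)
  exact uniformContinuous_snd.uniformContinuousOn

end Spheres

/-! ### Smith theory of a pair of commuting operators -/

section Algebra

variable {k : Type*} [CommRing k] {K : ℕ → Type*} [∀ ℓ, AddCommGroup (K ℓ)]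
  [∀ ℓ, Module k (K ℓ)]

/-- Cocycles of `S` that are killed by `a` can be divided by `b` within `S`, and dividing a cocycle
in the `j`-th filtration step `F j` gives a cochain with coboundary in `F (j + 1)`. -/
def LiftProp (δ : ∀ ℓ, K ℓ →ₗ[k] K (ℓ + 1)) (a b : ∀ ℓ, Module.End k (K ℓ))
    (S : ∀ ℓ, Submodule k (K ℓ)) (F : ℕ → ∀ ℓ, Submodule k (K ℓ)) : Prop :=
  ∀ j ℓ, ∀ x ∈ S (ℓ + 1), x ∈ F j (ℓ + 1) → δ _ x = 0 → a _ x = 0 →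
    ∃ y ∈ S (ℓ + 1), b _ y = x ∧ δ _ y ∈ F (j + 1) (ℓ + 2)

variable {δ : ∀ ℓ, K ℓ →ₗ[k] K (ℓ + 1)} {a b a' b' : ∀ ℓ, Module.End k (K ℓ)}

/-- Smith's argument: if the complex `S` is acyclic above level `n + 1`, so are the subcomplexes
`S ∩ ker a` and `S ∩ ker b`. The connecting homomorphisms between the two are injective in this
range, and nilpotent because they raise the filtration. -/
theorem smith_vanishing {S : ∀ ℓ, Submodule k (K ℓ)} {F : ℕ → ∀ ℓ, Submodule k (K ℓ)} {m n : ℕ}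
    (dd : ∀ ℓ x, δ (ℓ + 1) (δ ℓ x) = 0)
    (ad : ∀ ℓ x, δ ℓ (a ℓ x) = a _ (δ ℓ x)) (bd : ∀ ℓ x, δ ℓ (b ℓ x) = b _ (δ ℓ x))
    (ab : ∀ ℓ x, a ℓ (b ℓ x) = 0) (ba : ∀ ℓ x, b ℓ (a ℓ x) = 0)
    (Sd : ∀ ℓ, ∀ x ∈ S ℓ, δ ℓ x ∈ S (ℓ + 1))
    (Sa : ∀ ℓ, ∀ x ∈ S ℓ, a ℓ x ∈ S ℓ) (Sb : ∀ ℓ, ∀ x ∈ S ℓ, b ℓ x ∈ S ℓ)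
    (Sv : ∀ ℓ > n, ∀ x ∈ S (ℓ + 1), δ _ x = 0 → ∃ y ∈ S ℓ, δ ℓ y = x)
    (F0 : ∀ ℓ, F 0 ℓ = ⊤) (Fm : ∀ ℓ, F m ℓ = ⊥)
    (hab : LiftProp δ a b S F) (hba : LiftProp δ b a S F) :
    ∀ ℓ > n, ∀ x ∈ S (ℓ + 1), δ _ x = 0 →
      (a _ x = 0 → ∃ y ∈ S ℓ, a _ y = 0 ∧ δ ℓ y = x) ∧
      (b _ x = 0 → ∃ y ∈ S ℓ, b _ y = 0 ∧ δ ℓ y = x) := by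
  have key : ∀ i j, i + j = m → ∀ ℓ > n, ∀ x ∈ S (ℓ + 1), x ∈ F j (ℓ + 1) → δ _ x = 0 →
      (a _ x = 0 → ∃ y ∈ S ℓ, a _ y = 0 ∧ δ ℓ y = x) ∧
      (b _ x = 0 → ∃ y ∈ S ℓ, b _ y = 0 ∧ δ ℓ y = x) := by
    intro i
    induction i with
    | zero =>
      intro j hj ℓ _ x _ hx _
      obtain rfl : j = m := by omega
      rw [Fm, Submodule.mem_bot] at hx
      subst hx
      exact ⟨fun _ => ⟨0, zero_mem _, by simp, by simp⟩, fun _ => ⟨0, zero_mem _, by simp, by simp⟩⟩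
    | succ i ih =>
      intro j hj ℓ hℓ x hxS hxF hdx
      constructor
      · intro hax
        obtain ⟨y, hyS, hby, hy⟩ := hab j ℓ x hxS hxF hdx hax
        obtain ⟨c, hcS, hbc, hc⟩ := (ih (j + 1) (by omega) (ℓ + 1) (by omega) (δ _ y)
          (Sd _ _ hyS) hy (dd _ _)).2 (by rw [← bd, hby, hdx])
        obtain ⟨s, hsS, hs⟩ := Sv ℓ hℓ (y - c) (sub_mem hyS hcS) (by rw [map_sub, hc, sub_self])
        exact ⟨b _ s, Sb _ _ hsS, ab _ _, by rw [bd, hs, map_sub, hby, hbc, sub_zero]⟩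
      · intro hax
        obtain ⟨y, hyS, hby, hy⟩ := hba j ℓ x hxS hxF hdx hax
        obtain ⟨c, hcS, hbc, hc⟩ := (ih (j + 1) (by omega) (ℓ + 1) (by omega) (δ _ y)
          (Sd _ _ hyS) hy (dd _ _)).1 (by rw [← ad, hby, hdx])
        obtain ⟨s, hsS, hs⟩ := Sv ℓ hℓ (y - c) (sub_mem hyS hcS) (by rw [map_sub, hc, sub_self])
        exact ⟨a _ s, Sa _ _ hsS, ba _ _, by rw [ad, hs, map_sub, hby, hbc, sub_zero]⟩
  intro ℓ hℓ x hxS hdx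
  exact key m 0 (by omega) ℓ hℓ x hxS (by rw [F0]; trivial) hdx

/-- A cocycle in level `n + 1`, killed by `a` and `a'`, that is not the coboundary of an element of
the image of `b`. It is obtained from the constant cochain `1` by iterating the connecting
homomorphisms, which are injective below that level. -/
theorem exists_class {F : ℕ → ∀ ℓ, Submodule k (K ℓ)} {n : ℕ}
    (dd : ∀ ℓ x, δ (ℓ + 1) (δ ℓ x) = 0)
    (ad : ∀ ℓ x, δ ℓ (a ℓ x) = a _ (δ ℓ x)) (bd : ∀ ℓ x, δ ℓ (b ℓ x) = b _ (δ ℓ x))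
    (a'd : ∀ ℓ x, δ ℓ (a' ℓ x) = a' _ (δ ℓ x))
    (ab : ∀ ℓ x, a ℓ (b ℓ x) = 0) (ba : ∀ ℓ x, b ℓ (a ℓ x) = 0)
    (F0 : ∀ ℓ, F 0 ℓ = ⊤)
    (hab : LiftProp δ a b (fun ℓ => LinearMap.ker (a' ℓ)) F)
    (hba : LiftProp δ b a (fun ℓ => LinearMap.ker (a' ℓ)) F)
    (hlow : ∀ ℓ < n, ∀ x : K (ℓ + 1), δ _ x = 0 → ∃ y, δ ℓ y = x)
    (a0 : ∀ x, a 0 x = 0) (b0 : ∀ x, b 0 x = 0)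
    (u : K 1) (hu : u ≠ 0) (hdu : δ _ u = 0) (hau : a _ u = 0) (hbu : b _ u = 0)
    (ha'u : a' _ u = 0) :
    ∃ u : K (n + 1), δ _ u = 0 ∧ a' _ u = 0 ∧ a _ u = 0 ∧ ∀ s, δ n (b _ s) ≠ u := by
  have key : ∀ ℓ ≤ n,
      (∃ u : K (ℓ + 1), δ _ u = 0 ∧ a' _ u = 0 ∧ a _ u = 0 ∧ ∀ s, δ ℓ (b _ s) ≠ u) ∧
      (∃ u : K (ℓ + 1), δ _ u = 0 ∧ a' _ u = 0 ∧ b _ u = 0 ∧ ∀ s, δ ℓ (a _ s) ≠ u) := by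
    intro ℓ
    induction ℓ with
    | zero =>
      intro _
      exact ⟨⟨u, hdu, ha'u, hau, fun s => by rw [b0, map_zero]; exact hu.symm⟩,
        ⟨u, hdu, ha'u, hbu, fun s => by rw [a0, map_zero]; exact hu.symm⟩⟩
    | succ ℓ ih =>
      intro hℓ
      obtain ⟨⟨u, hdu, ha'u, hau, hu⟩, ⟨v, hdv, ha'v, hbv, hv⟩⟩ := ih (by omega)
      constructor
      · obtain ⟨y, hyS, hy, -⟩ := hba 0 ℓ v ha'v (by rw [F0]; trivial) hdv hbv
        refine ⟨δ _ y, dd _ _, by rw [← a'd, LinearMap.mem_ker.1 hyS, map_zero],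
          by rw [← ad, hy, hdv], fun s hs => ?_⟩
        obtain ⟨t, ht⟩ := hlow ℓ (by omega) (y - b _ s) (by rw [map_sub, hs, sub_self])
        exact hv t (by rw [ad, ht, map_sub, hy, ab, sub_zero])
      · obtain ⟨y, hyS, hy, -⟩ := hab 0 ℓ u ha'u (by rw [F0]; trivial) hdu hau
        refine ⟨δ _ y, dd _ _, by rw [← a'd, LinearMap.mem_ker.1 hyS, map_zero],
          by rw [← bd, hy, hdu], fun s hs => ?_⟩
        obtain ⟨t, ht⟩ := hlow ℓ (by omega) (y - a _ s) (by rw [map_sub, hs, sub_self])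
        exact hu t (by rw [bd, ht, map_sub, hy, ba, sub_zero])
  exact (key n le_rfl).1

/-- The algebraic contradiction. With `a = g - 1`, `b = 1 + g + ⋯ + g^(p-1)` and likewise `a'`, `b'`
for `h`, the top class of `exists_class` is a transfer `b' (b z)` of a cocycle `z`, hence is
cohomologous to zero among `g`-invariants since `b' z` is a coboundary. -/
theorem algebraic_contradiction {F F' : ℕ → ∀ ℓ, Submodule k (K ℓ)} {m m' n : ℕ}
    (dd : ∀ ℓ x, δ (ℓ + 1) (δ ℓ x) = 0)
    (ad : ∀ ℓ x, δ ℓ (a ℓ x) = a _ (δ ℓ x)) (bd : ∀ ℓ x, δ ℓ (b ℓ x) = b _ (δ ℓ x))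
    (a'd : ∀ ℓ x, δ ℓ (a' ℓ x) = a' _ (δ ℓ x)) (b'd : ∀ ℓ x, δ ℓ (b' ℓ x) = b' _ (δ ℓ x))
    (ab : ∀ ℓ x, a ℓ (b ℓ x) = 0) (ba : ∀ ℓ x, b ℓ (a ℓ x) = 0)
    (ab' : ∀ ℓ x, a' ℓ (b' ℓ x) = 0) (ba' : ∀ ℓ x, b' ℓ (a' ℓ x) = 0)
    (caa : ∀ ℓ x, a ℓ (a' ℓ x) = a' ℓ (a ℓ x)) (cab : ∀ ℓ x, a ℓ (b' ℓ x) = b' ℓ (a ℓ x))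
    (cbb : ∀ ℓ x, b ℓ (b' ℓ x) = b' ℓ (b ℓ x))
    (F0 : ∀ ℓ, F 0 ℓ = ⊤) (Fm : ∀ ℓ, F m ℓ = ⊥)
    (F0' : ∀ ℓ, F' 0 ℓ = ⊤) (Fm' : ∀ ℓ, F' m' ℓ = ⊥)
    (h1 : LiftProp δ a b (fun _ => ⊤) F) (h2 : LiftProp δ b a (fun _ => ⊤) F)
    (h3 : LiftProp δ a b (fun ℓ => LinearMap.ker (a' ℓ)) F)
    (h4 : LiftProp δ b a (fun ℓ => LinearMap.ker (a' ℓ)) F)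
    (h5 : LiftProp δ a' b' (fun ℓ => LinearMap.ker (a ℓ)) F')
    (h6 : LiftProp δ b' a' (fun ℓ => LinearMap.ker (a ℓ)) F')
    (hlow : ∀ ℓ < n, ∀ x : K (ℓ + 1), δ _ x = 0 → ∃ y, δ ℓ y = x)
    (hhigh : ∀ ℓ > n, ∀ x : K (ℓ + 1), δ _ x = 0 → ∃ y, δ ℓ y = x)
    (hrank : ∀ x : K (n + 1), δ _ x = 0 → ∃ s, δ n s = b' _ x)
    (a0 : ∀ x, a 0 x = 0) (b0 : ∀ x, b 0 x = 0)
    (u : K 1) (hu : u ≠ 0) (hdu : δ _ u = 0) (hau : a _ u = 0) (hbu : b _ u = 0)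
    (ha'u : a' _ u = 0) : False := by
  obtain ⟨u, hdu, ha'u, hau, hu⟩ :=
    exists_class (n := n) dd ad bd a'd ab ba F0 h3 h4 hlow a0 b0 u hu hdu hau hbu ha'u
  have v1 := smith_vanishing (n := n) (S := fun _ => ⊤) dd ad bd ab ba (fun _ _ _ => trivial) (fun _ _ _ => trivial)
    (fun _ _ _ => trivial)
    (fun ℓ hℓ x _ hx => (hhigh ℓ hℓ x hx).imp fun y hy => ⟨trivial, hy⟩) F0 Fm h1 h2
  have v2 := smith_vanishing (n := n) (S := fun ℓ => LinearMap.ker (a ℓ)) dd a'd b'd ab' ba'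
    (fun ℓ x hx => by rw [LinearMap.mem_ker] at hx ⊢; rw [← ad, hx, map_zero])
    (fun ℓ x hx => by rw [LinearMap.mem_ker] at hx ⊢; rw [caa, hx, map_zero])
    (fun ℓ x hx => by rw [LinearMap.mem_ker] at hx ⊢; rw [cab, hx, map_zero])
    (fun ℓ hℓ x hx hdx => by
      obtain ⟨y, -, h, h'⟩ := (v1 ℓ hℓ x trivial hdx).1 hx
      exact ⟨y, h, h'⟩) F0' Fm' h5 h6
  -- `u` is the transfer of a `g`-invariant cocycle `y - c`.
  obtain ⟨y, hya, hyu, -⟩ := h5 0 n u hau (by rw [F0']; trivial) hdu ha'u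
  rw [LinearMap.mem_ker] at hya
  obtain ⟨c, hca, hcb, hc⟩ := (v2 (n + 1) (by omega) (δ _ y)
    (by rw [LinearMap.mem_ker, ← ad, hya, map_zero]) (dd _ _)).2 (by rw [← b'd, hyu, hdu])
  rw [LinearMap.mem_ker] at hca
  -- In turn `y - c` is the transfer of a cocycle `z - e`.
  have hw : δ _ (y - c) = 0 := by rw [map_sub, hc, sub_self]
  obtain ⟨z, -, hz, -⟩ := h1 0 n (y - c) trivial (by rw [F0]; trivial) hw
    (by rw [map_sub, hya, hca, sub_zero])
  obtain ⟨e, -, heb, he⟩ := (v1 (n + 1) (by omega) (δ _ z) trivial (dd _ _)).2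
    (by rw [← bd, hz, hw])
  obtain ⟨s, hs⟩ := hrank (z - e) (by rw [map_sub, he, sub_self])
  refine hu s ?_
  rw [bd, hs, cbb, map_sub, hz, heb, sub_zero, map_sub, hyu, hcb, sub_zero]

end Algebra

/-! ### Trivializing covers for a free action -/

section Cover

variable {X Γ : Type*} [MetricSpace X] [CommGroup Γ] [Finite Γ]

/-- A choice of representative in each orbit trivializes a free action, without any continuity. -/
theorem exists_equivariant (R : Γ → X → X) (h1 : ∀ x, R 1 x = x)
    (hmul : ∀ γ γ' x, R (γ * γ') x = R γ (R γ' x)) (hfree : ∀ γ x, R γ x = x → γ = 1) :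
    ∃ σ : X → Γ, ∀ γ x, σ (R γ x) = γ * σ x := by
  have hinv : ∀ γ x, R γ⁻¹ (R γ x) = x := fun γ x => by rw [← hmul, inv_mul_cancel, h1]
  let s : Setoid X :=
    { r := fun x y => ∃ γ, R γ x = y
      iseqv := ⟨fun x => ⟨1, h1 x⟩, fun ⟨γ, h⟩ => ⟨γ⁻¹, by rw [← h, hinv]⟩,
        fun ⟨γ, h⟩ ⟨γ', h'⟩ => ⟨γ' * γ, by rw [hmul, h, h']⟩⟩ }
  have hrep : ∀ x, ∃ γ, R γ (Quotient.mk s x).out = x := fun x => Quotient.mk_out (s := s) x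
  choose σ hσ using hrep
  refine ⟨σ, fun γ x => ?_⟩
  have hq : Quotient.mk s (R γ x) = Quotient.mk s x := (Quotient.sound (s := s) ⟨γ, rfl⟩).symm
  have e := hσ (R γ x)
  rw [hq] at e
  have e2 : R γ⁻¹ (R (σ (R γ x)) (Quotient.mk s x).out) = x := by rw [e, hinv]
  have e3 : R ((σ x)⁻¹ * (γ⁻¹ * σ (R γ x))) (Quotient.mk s x).out = (Quotient.mk s x).out := by
    rw [hmul, hmul, e2]
    have e5 := hinv (σ x) (Quotient.mk s x).out
    rw [hσ x] at e5
    exact e5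
  have e4 := hfree _ _ e3
  rw [inv_mul_eq_one, eq_inv_mul_iff_mul_eq] at e4
  exact e4.symm

/-- Locally the covering `X → X / Γ` is trivial, with a uniform separation of the sheets. -/
theorem exists_local_trivialization (R : Γ → X → X) (h1 : ∀ x, R 1 x = x)
    (hmul : ∀ γ γ' x, R (γ * γ') x = R γ (R γ' x)) (hfree : ∀ γ x, R γ x = x → γ = 1)
    (hc : ∀ γ, Continuous (R γ)) (x : X) :
    ∃ (A : Set X) (σ : X → Γ), IsOpen A ∧ x ∈ A ∧ (∀ γ, ∀ y ∈ A, R γ y ∈ A) ∧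
      (∀ γ y, σ (R γ y) = γ * σ y) ∧
      ∃ ε > 0, ∀ y ∈ A, ∀ z ∈ A, dist y z < ε → σ y = σ z := by
  classical
  obtain ⟨σ₀, hσ₀⟩ := exists_equivariant R h1 hmul hfree
  have hinv : ∀ γ x, R γ⁻¹ (R γ x) = x := fun γ x => by rw [← hmul, inv_mul_cancel, h1]
  have hinv' : ∀ γ x, R γ (R γ⁻¹ x) = x := fun γ x => by rw [← hmul, mul_inv_cancel, h1]
  -- Distinct points of the orbit of `x` are at distance at least `3 * η`.
  obtain ⟨η, hη, hpos⟩ : ∃ η : ℝ, (∀ γ γ' : Γ, dist (R γ x) (R γ' x) < 3 * η → γ = γ') ∧ 0 < η := by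
    have : ∀ᶠ η : ℝ in nhdsWithin 0 (Set.Ioi 0),
        ∀ γ γ' : Γ, dist (R γ x) (R γ' x) < 3 * η → γ = γ' := by
      refine Filter.eventually_all.2 fun γ => Filter.eventually_all.2 fun γ' => ?_
      by_cases h : γ = γ'
      · exact Filter.Eventually.of_forall fun _ _ => h
      · have hd : 0 < dist (R γ x) (R γ' x) := by
          refine dist_pos.2 fun he => h ?_
          have := hfree (γ'⁻¹ * γ) x (by rw [hmul, he, hinv])
          rw [inv_mul_eq_one] at this
          exact this.symm
        have : Set.Iio (dist (R γ x) (R γ' x) / 3) ∈ nhdsWithin (0 : ℝ) (Set.Ioi 0) :=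
          mem_nhdsWithin_of_mem_nhds (Iio_mem_nhds (by positivity))
        filter_upwards [this] with η hη hlt
        have : η < dist (R γ x) (R γ' x) / 3 := hη
        linarith
    obtain ⟨η, h1, h2⟩ := (this.and self_mem_nhdsWithin).exists
    exact ⟨η, h1, h2⟩
  let B : Set X := ⋂ γ, R γ ⁻¹' Metric.ball (R γ x) η
  have hBo : IsOpen B := isOpen_iInter_of_finite fun γ => Metric.isOpen_ball.preimage (hc γ)
  have hB : ∀ b ∈ B, ∀ γ, dist (R γ b) (R γ x) < η := fun b hb γ => Set.mem_iInter.1 hb γ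
  let A : Set X := ⋃ γ : Γ, R γ⁻¹ ⁻¹' B
  have hAmem : ∀ y, y ∈ A ↔ ∃ γ : Γ, R γ⁻¹ y ∈ B := fun y => by simp [A]
  have hAex : ∀ y, ∃ γ : Γ, y ∈ A → R γ⁻¹ y ∈ B := by
    intro y
    by_cases hy : y ∈ A
    · obtain ⟨γ, h⟩ := (hAmem y).1 hy
      exact ⟨γ, fun _ => h⟩
    · exact ⟨1, fun h => (hy h).elim⟩
  choose τ hτ using hAex
  have hclose : ∀ y γ, R γ⁻¹ y ∈ B → dist y (R γ x) < η := by
    intro y γ h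
    have := hB _ h γ
    rwa [hinv'] at this
  have hAinv : ∀ γ, ∀ y ∈ A, R γ y ∈ A := by
    intro γ y hy
    refine (hAmem _).2 ⟨γ * τ y, ?_⟩
    rw [mul_comm, mul_inv_rev, mul_comm, hmul, hinv]
    exact hτ y hy
  refine ⟨A, fun y => if y ∈ A then τ y else σ₀ y,
    isOpen_iUnion fun γ => hBo.preimage (hc _), (hAmem x).2 ⟨1, ?_⟩, hAinv, ?_, η, hpos, ?_⟩
  · rw [inv_one, h1]
    exact Set.mem_iInter.2 fun γ => Metric.mem_ball_self hpos
  · intro γ y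
    by_cases hy : y ∈ A
    · simp only [if_pos hy, if_pos (hAinv γ y hy)]
      refine hη _ _ ?_
      have d1 := hclose _ _ (hτ _ (hAinv γ y hy))
      have d2 : dist (R γ y) (R (γ * τ y) x) < η := by
        refine hclose _ _ ?_
        rw [mul_comm, mul_inv_rev, mul_comm, hmul, hinv]
        exact hτ y hy
      have := dist_triangle_left (R (τ (R γ y)) x) (R (γ * τ y) x) (R γ y)
      linarith
    · have hy' : R γ y ∉ A := fun h => hy (by have := hAinv γ⁻¹ _ h; rwa [hinv] at this)
      simp only [if_neg hy, if_neg hy', hσ₀]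
  · intro y hy z hz hyz
    simp only [if_pos hy, if_pos hz]
    refine hη _ _ ?_
    have d1 := hclose _ _ (hτ y hy)
    have d2 := hclose _ _ (hτ z hz)
    have t1 := dist_triangle_left (R (τ y) x) z y
    have t2 := dist_triangle (R (τ y) x) z (R (τ z) x)
    linarith

/-- By compactness finitely many trivializing invariant subsets `A j` suffice, and they have a
Lebesgue number. The map `σ j` names the sheet over `A j` that contains a point. -/
theorem exists_cover [CompactSpace X] [Nonempty X] (R : Γ → X → X) (h1 : ∀ x, R 1 x = x)
    (hmul : ∀ γ γ' x, R (γ * γ') x = R γ (R γ' x)) (hfree : ∀ γ x, R γ x = x → γ = 1)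
    (hc : ∀ γ, Continuous (R γ)) :
    ∃ (m : ℕ) (A : ℕ → Set X) (σ : ℕ → X → Γ),
      (∀ j γ, ∀ y ∈ A j, R γ y ∈ A j) ∧ (∀ j γ y, σ j (R γ y) = γ * σ j y) ∧
      (∀ j, ∃ ε > 0, ∀ y ∈ A j, ∀ z ∈ A j, dist y z < ε → σ j y = σ j z) ∧
      ∃ ε > 0, ∀ l, Small Set.univ ε l → ∃ j < m, ∀ x ∈ l, x ∈ A j := by
  choose A σ hAo hxA hA hσ hloc using exists_local_trivialization R h1 hmul hfree hc
  obtain ⟨t, ht⟩ := isCompact_univ.elim_nhds_subcover A fun x _ => (hAo x).mem_nhds (hxA x)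
  obtain ⟨x₀⟩ := ‹Nonempty X›
  have ht' : Set.univ ⊆ ⋃ i : t, A i := fun x hx => by
    obtain ⟨i, hi, h⟩ := Set.mem_iUnion₂.1 (ht.2 hx)
    exact Set.mem_iUnion.2 ⟨⟨i, hi⟩, h⟩
  obtain ⟨ε, hε, hleb⟩ := lebesgue_number_lemma_of_metric isCompact_univ
    (fun i : t => hAo i) ht'
  let c : ℕ → X := fun j => t.toList.getD j x₀
  have hcov : ∀ i ∈ t, ∃ j < t.card, c j = i := by
    intro i hi
    obtain ⟨j, hj, h⟩ := List.mem_iff_getElem.1 (Finset.mem_toList.2 hi)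
    refine ⟨j, by simpa using hj, ?_⟩
    simp only [c]
    rw [List.getD_eq_getElem _ _ hj, h]
  have key : ∀ x, ∃ j < t.card, Metric.ball x ε ⊆ A (c j) := by
    intro x
    obtain ⟨⟨i, hi⟩, h⟩ := hleb x trivial
    obtain ⟨j, hj, rfl⟩ := hcov i hi
    exact ⟨j, hj, h⟩
  refine ⟨t.card, fun j => A (c j), fun j => σ (c j), fun j => hA _, fun j => hσ _,
    fun j => hloc _, ε, hε, fun l hl => ?_⟩
  cases l with
  | nil =>
    obtain ⟨j, hj, -⟩ := key x₀
    exact ⟨j, hj, by simp⟩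
  | cons x l =>
    obtain ⟨j, hj, h⟩ := key x
    exact ⟨j, hj, fun y hy => h (hl.2 y hy x (by simp))⟩

end Cover

/-! ### Transfers and Alexander–Spanier cochains -/

section Operators

variable {k : Type*} [CommRing k] {K : ℕ → Type*} [∀ ℓ, AddCommGroup (K ℓ)]
  [∀ ℓ, Module k (K ℓ)] {Γ : Type*} [CommGroup Γ]

/-- The operator `γ - 1`. -/
def opA (ρ : Γ → ∀ ℓ, Module.End k (K ℓ)) (γ : Γ) (ℓ : ℕ) : Module.End k (K ℓ) :=
  ρ γ ℓ - 1

/-- The transfer `1 + γ + ⋯ + γ ^ (p - 1)`. -/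
def opB (ρ : Γ → ∀ ℓ, Module.End k (K ℓ)) (p : ℕ) (γ : Γ) (ℓ : ℕ) : Module.End k (K ℓ) :=
  ∑ i ∈ Finset.range p, ρ (γ ^ i) ℓ

variable {ρ : Γ → ∀ ℓ, Module.End k (K ℓ)} {p : ℕ} {δ : ∀ ℓ, K ℓ →ₗ[k] K (ℓ + 1)}

theorem opA_apply (γ : Γ) {ℓ : ℕ} (x : K ℓ) : opA ρ γ ℓ x = ρ γ ℓ x - x := rfl

theorem opB_apply (γ : Γ) {ℓ : ℕ} (x : K ℓ) :
    opB ρ p γ ℓ x = ∑ i ∈ Finset.range p, ρ (γ ^ i) ℓ x := by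
  simp [opB]

theorem opA_opB (ρm : ∀ γ γ' ℓ x, ρ (γ * γ') ℓ x = ρ γ ℓ (ρ γ' ℓ x))
    {γ : Γ} (hγ : γ ^ p = 1) (ℓ : ℕ) (x : K ℓ) : opA ρ γ ℓ (opB ρ p γ ℓ x) = 0 := by
  rw [opA_apply, opB_apply, map_sum, ← Finset.sum_sub_distrib]
  simp only [← ρm, ← pow_succ']
  rw [Finset.sum_range_sub (fun i => ρ (γ ^ i) ℓ x), hγ, pow_zero, sub_self]

theorem opB_opA (ρm : ∀ γ γ' ℓ x, ρ (γ * γ') ℓ x = ρ γ ℓ (ρ γ' ℓ x))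
    {γ : Γ} (hγ : γ ^ p = 1) (ℓ : ℕ) (x : K ℓ) : opB ρ p γ ℓ (opA ρ γ ℓ x) = 0 := by
  rw [opA_apply, opB_apply]
  simp only [map_sub, ← ρm, ← pow_succ]
  rw [Finset.sum_range_sub (fun i => ρ (γ ^ i) ℓ x), hγ, pow_zero, sub_self]

/-- Division by `γ - 1` and by the transfer, by means of operators `e j` whose conjugates under the
powers of `γ` form a partition of unity. -/
theorem liftProp_of_partition {S : ∀ ℓ, Submodule k (K ℓ)} {F : ℕ → ∀ ℓ, Submodule k (K ℓ)}
    (ρ1 : ∀ ℓ x, ρ 1 ℓ x = x) (ρm : ∀ γ γ' ℓ x, ρ (γ * γ') ℓ x = ρ γ ℓ (ρ γ' ℓ x))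
    (ρd : ∀ γ ℓ x, δ ℓ (ρ γ ℓ x) = ρ γ _ (δ ℓ x)) {γ : Γ}
    (e : ℕ → ∀ ℓ, Module.End k (K ℓ))
    (he : ∀ j ℓ (x : K (ℓ + 1)),
      ∑ i ∈ Finset.range p, ρ (γ ^ i) _ (e j _ (ρ (γ ^ i)⁻¹ _ x)) = x)
    (Sρ : ∀ γ ℓ, ∀ x ∈ S ℓ, ρ γ ℓ x ∈ S ℓ) (Se : ∀ j ℓ, ∀ x ∈ S ℓ, e j ℓ x ∈ S ℓ)
    (Fρ : ∀ γ j ℓ, ∀ x ∈ F j ℓ, ρ γ ℓ x ∈ F j ℓ)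
    (Fe : ∀ j ℓ, ∀ x ∈ F j (ℓ + 1), δ _ x = 0 → δ _ (e j _ x) ∈ F (j + 1) (ℓ + 2)) :
    LiftProp δ (opA ρ γ) (opB ρ p γ) S F ∧ LiftProp δ (opB ρ p γ) (opA ρ γ) S F := by
  constructor
  · intro j ℓ x hxS hxF hdx hax
    refine ⟨e j _ x, Se _ _ _ hxS, ?_, Fe _ _ _ hxF hdx⟩
    rw [opA_apply, sub_eq_zero] at hax
    have hpow : ∀ i : ℕ, ρ (γ ^ i) _ x = x := by
      intro i
      induction i with
      | zero => rw [pow_zero, ρ1]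
      | succ i ih => rw [pow_succ, ρm, hax, ih]
    have hinv : ∀ i : ℕ, ρ (γ ^ i)⁻¹ _ x = x := fun i => by
      conv_lhs => rw [← hpow i, ← ρm, inv_mul_cancel, ρ1]
    conv_rhs => rw [← he j ℓ x]
    rw [opB_apply]
    simp only [hinv]
  · intro j ℓ x hxS hxF hdx hbx
    rw [opB_apply] at hbx
    refine ⟨∑ i ∈ Finset.range p, ∑ q ∈ Finset.range i, ρ (γ ^ q) _ (e j _ (ρ (γ ^ i)⁻¹ _ x)),
      sum_mem fun i _ => sum_mem fun q _ => Sρ _ _ _ (Se _ _ _ (Sρ _ _ _ hxS)), ?_, ?_⟩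
    · have h1 : ∀ i : ℕ, opA ρ γ _
          (∑ q ∈ Finset.range i, ρ (γ ^ q) _ (e j _ (ρ (γ ^ i)⁻¹ _ x))) =
          ρ (γ ^ i) _ (e j _ (ρ (γ ^ i)⁻¹ _ x)) - e j _ (ρ (γ ^ i)⁻¹ _ x) := by
        intro i
        rw [opA_apply, map_sum, ← Finset.sum_sub_distrib]
        simp only [← ρm _ (γ ^ _), ← pow_succ']
        rw [Finset.sum_range_sub (fun q => ρ (γ ^ q) _ (e j _ (ρ (γ ^ i)⁻¹ _ x))), pow_zero, ρ1]
      have h2 : ∑ i ∈ Finset.range p, ρ (γ ^ i)⁻¹ _ x = 0 := by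
        have := congrArg (ρ (γ ^ (p - 1))⁻¹ _) hbx
        rw [map_zero, map_sum, ← Finset.sum_range_reflect] at this
        rw [← this]
        refine Finset.sum_congr rfl fun i hi => ?_
        have hi := Finset.mem_range.1 hi
        rw [← ρm]
        congr 2
        rw [eq_inv_mul_iff_mul_eq, mul_inv_eq_iff_eq_mul, ← pow_add]
        congr 1
        omega
      rw [map_sum, Finset.sum_congr rfl fun i _ => h1 i, Finset.sum_sub_distrib, he, ← map_sum, h2,
        map_zero, sub_zero]
    · simp only [map_sum, ρd]
      refine sum_mem fun i _ => sum_mem fun q _ => Fρ _ _ _ _ (Fe _ _ _ (Fρ _ _ _ _ hxF) ?_)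
      rw [ρd, hdx, map_zero]

end Operators

section MulHead

variable {k : Type*} [Field k] {X : Type*}

/-- Multiplication of a cochain by a function of its first argument. -/
def mulHead (c : X → k) : (List X → k) →ₗ[k] (List X → k) where
  toFun f
    | [] => 0
    | x :: l => c x * f (x :: l)
  map_add' f g := by
    ext l
    cases l <;> simp [mul_add]
  map_smul' a f := by
    ext l
    cases l
    · simp
    · simp [mul_left_comm]

@[simp] theorem mulHead_nil (c : X → k) (f : List X → k) : mulHead c f [] = 0 := rfl

@[simp] theorem mulHead_cons (c : X → k) (f : List X → k) (x : X) (l : List X) :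
    mulHead c f (x :: l) = c x * f (x :: l) := rfl

end MulHead

section Quotient

variable {k : Type*} [Field k] {X : Type*} [PseudoMetricSpace X]

variable (k X) in
/-- The augmented Alexander–Spanier cochains of `X`, in level `ℓ`, that is, in degree `ℓ - 1`.
Representatives are functions on lists of all lengths, but only lists of length `ℓ` matter. -/
abbrev AS (ℓ : ℕ) : Type _ := (List X → k) ⧸ O k (Set.univ : Set X) ℓ

/-- The class of a cochain. -/
abbrev cl (ℓ : ℕ) (f : List X → k) : AS k X ℓ := Submodule.Quotient.mk f

theorem cl_eq_zero {ℓ : ℕ} {f : List X → k} : cl ℓ f = 0 ↔ f ∈ O k (Set.univ : Set X) ℓ :=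
  Submodule.Quotient.mk_eq_zero _

variable (k X) in
/-- The coboundary of Alexander–Spanier cochains. -/
def dQ (ℓ : ℕ) : AS k X ℓ →ₗ[k] AS k X (ℓ + 1) :=
  Submodule.mapQ _ _ d fun _ hf => d_mem_O hf

theorem dQ_cl (ℓ : ℕ) (f : List X → k) : dQ k X ℓ (cl ℓ f) = cl (ℓ + 1) (d f) := rfl

variable (k) in
/-- The action of a uniformly continuous map on Alexander–Spanier cochains. -/
def pullQ (φ : X → X) (hφ : UniformContinuous φ) (ℓ : ℕ) : Module.End k (AS k X ℓ) :=
  Submodule.mapQ _ _ (pull φ) fun _ hf =>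
    pull_mem_O (Set.mapsTo_univ _ _) hφ.uniformContinuousOn hf

theorem pullQ_cl (φ : X → X) (hφ : UniformContinuous φ) (ℓ : ℕ) (f : List X → k) :
    pullQ k φ hφ ℓ (cl ℓ f) = cl ℓ (pull φ f) := rfl

theorem mulHead_mem_O (c : X → k) {A : Set X} {ℓ : ℕ} {f : List X → k} (hf : f ∈ O k A ℓ) :
    mulHead c f ∈ O k A ℓ := by
  obtain ⟨ε, hε, h⟩ := hf
  refine ⟨ε, hε, fun l hl hs => ?_⟩
  cases l with
  | nil => rfl
  | cons x l => rw [mulHead_cons, h _ hl hs, mul_zero]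

/-- Multiplication of an Alexander–Spanier cochain by a function of its first argument. -/
def mulQ (c : X → k) (ℓ : ℕ) : Module.End k (AS k X ℓ) :=
  Submodule.mapQ _ _ (mulHead c) fun _ hf => mulHead_mem_O c hf

theorem mulQ_cl (c : X → k) (ℓ : ℕ) (f : List X → k) :
    mulQ c ℓ (cl ℓ f) = cl ℓ (mulHead c f) := rfl

/-- Where `c` is locally constant with uniform separation, multiplication by `c` preserves
cocycles. -/
theorem d_mulHead_mem_O {c : X → k} {A : Set X} {ε : ℝ} (hε : 0 < ε)
    (hc : ∀ y ∈ A, ∀ z ∈ A, dist y z < ε → c y = c z) {ℓ : ℕ} {f : List X → k}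
    (hf : d f ∈ O k A (ℓ + 2)) : d (mulHead c f) ∈ O k A (ℓ + 2) := by
  obtain ⟨η, hη, hf⟩ := hf
  refine ⟨min η ε, lt_min hη hε, fun l hl hs => ?_⟩
  have hs1 := hs.mono (List.Subset.refl _) subset_rfl (min_le_left _ _)
  have hs2 := hs.mono (List.Subset.refl _) subset_rfl (min_le_right _ _)
  obtain ⟨x, l', rfl⟩ : ∃ x l', l = x :: l' := List.exists_cons_of_length_eq_add_one hl
  have h1 : d (mulHead c f - c x • f) (x :: l') = 0 := by
    refine d_local _ _ fun m hm hlen => ?_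
    cases m with
    | nil => simp only [List.length_nil, List.length_cons] at hlen hl; omega
    | cons y m =>
      have hy : y ∈ x :: l' := hm (by simp)
      rw [Pi.sub_apply, Pi.smul_apply, mulHead_cons, smul_eq_mul,
        hc y (hs.1 y hy) x (hs.1 x (by simp)) (hs2.2 y hy x (by simp)), sub_self]
  rw [map_sub, Pi.sub_apply, map_smul, Pi.smul_apply, hf _ hl hs1, smul_zero, sub_zero] at h1
  exact h1

variable (k) in
/-- The filtration by the cochains that vanish on the first `j` members of a family of subsets. -/
def Fil (A : ℕ → Set X) (j ℓ : ℕ) : Submodule k (AS k X ℓ) :=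
  (⨅ i : Fin j, O k (A i) ℓ).map (Submodule.mkQ _)

theorem cl_mem_Fil {A : ℕ → Set X} {j ℓ : ℕ} {f : List X → k} :
    cl ℓ f ∈ Fil k A j ℓ ↔ ∀ i < j, f ∈ O k (A i) ℓ := by
  constructor
  · rintro ⟨g, hg, h⟩ i hi
    have hg' := (Submodule.mem_iInf _).1 hg ⟨i, hi⟩
    have h' : f - g ∈ O k (A i) ℓ :=
      O_anti (Set.subset_univ _) ((Submodule.Quotient.eq _).1 (show cl ℓ f = cl ℓ g from h.symm))
    have := add_mem h' hg'
    rwa [sub_add_cancel] at this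
  · intro h
    exact ⟨f, (Submodule.mem_iInf _).2 fun i => h i i.2, rfl⟩

theorem Fil_zero (A : ℕ → Set X) (ℓ : ℕ) : Fil k A 0 ℓ = ⊤ := by
  rw [eq_top_iff]
  intro x _
  obtain ⟨f, rfl⟩ := Submodule.Quotient.mk_surjective _ x
  exact cl_mem_Fil.2 fun i hi => (Nat.not_lt_zero i hi).elim

/-- The filtration is exhaustive for a cover with a Lebesgue number: a cochain vanishing near the
diagonal of every member vanishes near the diagonal of the whole space. -/
theorem Fil_eq_bot {A : ℕ → Set X} {m : ℕ} {ε : ℝ} (hε : 0 < ε)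
    (h : ∀ l, Small Set.univ ε l → ∃ j < m, ∀ x ∈ l, x ∈ A j) (ℓ : ℕ) : Fil k A m ℓ = ⊥ := by
  rw [eq_bot_iff]
  intro x hx
  obtain ⟨f, rfl⟩ := Submodule.Quotient.mk_surjective _ x
  rw [Submodule.mem_bot]
  refine cl_eq_zero.2 ?_
  have hx := cl_mem_Fil.1 hx
  have key : ∀ᶠ η : ℝ in nhdsWithin 0 (Set.Ioi 0), ∀ i : Fin m, ∀ l : List X,
      l.length = ℓ → Small (A i) η l → f l = 0 := by
    refine Filter.eventually_all.2 fun i => ?_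
    obtain ⟨η, hη, hf⟩ := hx i i.2
    filter_upwards [Ioo_mem_nhdsGT hη] with η' hη' l hl hs
    exact hf l hl (hs.mono (List.Subset.refl _) subset_rfl hη'.2.le)
  obtain ⟨η, hη, hη'⟩ := (key.and (Ioo_mem_nhdsGT hε)).exists
  refine ⟨η, hη'.1, fun l hl hs => ?_⟩
  obtain ⟨j, hj, hA⟩ := h l (hs.mono (List.Subset.refl _) subset_rfl hη'.2.le)
  exact hη ⟨j, hj⟩ l hl ⟨hA, hs.2⟩

theorem exists_dQ_of_cobd {ℓ : ℕ} {f : List X → k} (h : Cobd Set.univ (ℓ + 1) f) :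
    ∃ y, dQ k X ℓ y = cl (ℓ + 1) f := by
  obtain ⟨g, hg⟩ := h
  exact ⟨cl ℓ g, ((Submodule.Quotient.eq _).2 hg).symm⟩

theorem exists_dQ {D ℓ : ℕ} (hX : SphereLike k (Set.univ : Set X) D) (hℓ : ℓ + 1 ≠ D)
    (x : AS k X (ℓ + 1)) (hx : dQ k X _ x = 0) : ∃ y, dQ k X ℓ y = x := by
  obtain ⟨f, rfl⟩ := Submodule.Quotient.mk_surjective _ x
  exact exists_dQ_of_cobd (hX.1 _ hℓ f (cl_eq_zero.1 hx))

/-- Any two top classes are proportional. -/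
theorem exists_smul_dQ {n : ℕ} (hX : SphereLike k (Set.univ : Set X) (n + 1))
    (x x' : AS k X (n + 1)) (hx : dQ k X _ x = 0) (hx' : dQ k X _ x' = 0) (h : ¬ ∃ y, dQ k X n y = x') :
    ∃ c : k, ∃ y, dQ k X n y = x - c • x' := by
  obtain ⟨f, rfl⟩ := Submodule.Quotient.mk_surjective _ x
  obtain ⟨f', rfl⟩ := Submodule.Quotient.mk_surjective _ x'
  obtain ⟨c, hc⟩ := hX.2 f f' (cl_eq_zero.1 hx) (cl_eq_zero.1 hx') fun h' => h (exists_dQ_of_cobd h')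
  exact ⟨c, exists_dQ_of_cobd hc⟩

end Quotient

/-! ### Actions on Alexander–Spanier cochains -/

section Actions

variable {k : Type*} [Field k] {X : Type*} [PseudoMetricSpace X] {Γ : Type*} [CommGroup Γ]
  {R : Γ → X → X}

variable (k) in
/-- The action of `Γ` on Alexander–Spanier cochains. It is a left action because `Γ` is
commutative. -/
def rep (hu : ∀ γ, UniformContinuous (R γ)) (γ : Γ) (ℓ : ℕ) : Module.End k (AS k X ℓ) :=
  pullQ k (R γ) (hu γ) ℓ

variable (hu : ∀ γ, UniformContinuous (R γ))

theorem rep_cl (γ : Γ) (ℓ : ℕ) (f : List X → k) :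
    rep k hu γ ℓ (cl ℓ f) = cl ℓ (pull (R γ) f) := rfl

theorem rep_one (h1 : ∀ x, R 1 x = x) (ℓ : ℕ) (x : AS k X ℓ) : rep k hu 1 ℓ x = x := by
  obtain ⟨f, rfl⟩ := Submodule.Quotient.mk_surjective _ x
  rw [rep_cl, show R 1 = id from funext h1, pull_id]

theorem rep_mul (hmul : ∀ γ γ' x, R (γ * γ') x = R γ (R γ' x)) (γ γ' : Γ) (ℓ : ℕ)
    (x : AS k X ℓ) : rep k hu (γ * γ') ℓ x = rep k hu γ ℓ (rep k hu γ' ℓ x) := by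
  obtain ⟨f, rfl⟩ := Submodule.Quotient.mk_surjective _ x
  rw [rep_cl, rep_cl, rep_cl]
  congr 1
  ext l
  simp only [pull_apply, List.map_map]
  congr 2
  ext x
  rw [mul_comm, hmul]
  rfl

theorem dQ_rep (γ : Γ) (ℓ : ℕ) (x : AS k X ℓ) :
    dQ k X ℓ (rep k hu γ ℓ x) = rep k hu γ _ (dQ k X ℓ x) := by
  obtain ⟨f, rfl⟩ := Submodule.Quotient.mk_surjective _ x
  rw [rep_cl, dQ_cl, dQ_cl, rep_cl, d_pull']

theorem dQ_dQ (ℓ : ℕ) (x : AS k X ℓ) : dQ k X (ℓ + 1) (dQ k X ℓ x) = 0 := by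
  obtain ⟨f, rfl⟩ := Submodule.Quotient.mk_surjective _ x
  rw [dQ_cl, dQ_cl, d_comp_d]
  rfl

theorem rep_mem_Fil {A : ℕ → Set X} (hA : ∀ j γ, ∀ y ∈ A j, R γ y ∈ A j) (γ : Γ) (j ℓ : ℕ)
    (x : AS k X ℓ) (hx : x ∈ Fil k A j ℓ) : rep k hu γ ℓ x ∈ Fil k A j ℓ := by
  obtain ⟨f, rfl⟩ := Submodule.Quotient.mk_surjective _ x
  rw [rep_cl]
  exact cl_mem_Fil.2 fun i hi =>
    pull_mem_O (hA i γ) (hu γ).uniformContinuousOn (cl_mem_Fil.1 hx i hi)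

/-- If `c` is locally constant on `A j`, then multiplying by `c` a cocycle that vanishes on the
first `j` sets gives a cochain whose coboundary also vanishes on `A j`. -/
theorem dQ_mulQ_mem_Fil {A : ℕ → Set X} {c : X → k} {ε : ℝ} (hε : 0 < ε) {j : ℕ}
    (hc : ∀ y ∈ A j, ∀ z ∈ A j, dist y z < ε → c y = c z) (ℓ : ℕ)
    (x : AS k X (ℓ + 1)) (hx : x ∈ Fil k A j (ℓ + 1)) (hdx : dQ k X _ x = 0) :
    dQ k X _ (mulQ c _ x) ∈ Fil k A (j + 1) (ℓ + 2) := by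
  obtain ⟨f, rfl⟩ := Submodule.Quotient.mk_surjective _ x
  rw [mulQ_cl, dQ_cl]
  refine cl_mem_Fil.2 fun i hi => ?_
  rcases Nat.lt_succ_iff_lt_or_eq.1 hi with hi | rfl
  · exact d_mem_O (mulHead_mem_O _ (cl_mem_Fil.1 hx i hi))
  · exact d_mulHead_mem_O hε hc (O_anti (Set.subset_univ _) (cl_eq_zero.1 hdx))

theorem pull_mulHead (φ : X → X) (c : X → k) (f : List X → k) :
    pull φ (mulHead c f) = mulHead (c ∘ φ) (pull φ f) := by
  ext l
  cases l <;> simp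

theorem rep_mulQ {γ : Γ} {c : X → k} (hc : ∀ x, c (R γ x) = c x) (ℓ : ℕ) (x : AS k X ℓ) :
    rep k hu γ ℓ (mulQ c ℓ x) = mulQ c ℓ (rep k hu γ ℓ x) := by
  obtain ⟨f, rfl⟩ := Submodule.Quotient.mk_surjective _ x
  rw [rep_cl, mulQ_cl, mulQ_cl, rep_cl, pull_mulHead, show c ∘ R γ = c from funext hc]

/-- The translates of `c` by the powers of `γ` form a partition of unity. Level `0` is excluded
since there is no first argument to multiply by. -/
theorem sum_conj_mulQ (h1 : ∀ x, R 1 x = x) (hmul : ∀ γ γ' x, R (γ * γ') x = R γ (R γ' x))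
    {γ : Γ} {p : ℕ} {c : X → k} (hc : ∀ x, ∑ i ∈ Finset.range p, c (R (γ ^ i) x) = 1) (ℓ : ℕ)
    (x : AS k X (ℓ + 1)) :
    ∑ i ∈ Finset.range p, rep k hu (γ ^ i) _ (mulQ c _ (rep k hu (γ ^ i)⁻¹ _ x)) = x := by
  have hconj : ∀ i : ℕ, rep k hu (γ ^ i) _ (mulQ c _ (rep k hu (γ ^ i)⁻¹ _ x)) =
      mulQ (c ∘ R (γ ^ i)) _ x := by
    intro i
    have : ∀ y : AS k X (ℓ + 1), rep k hu (γ ^ i) _ (mulQ c _ y) =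
        mulQ (c ∘ R (γ ^ i)) _ (rep k hu (γ ^ i) _ y) := by
      intro y
      obtain ⟨f, rfl⟩ := Submodule.Quotient.mk_surjective _ y
      rw [rep_cl, mulQ_cl, mulQ_cl, rep_cl, pull_mulHead]
    rw [this, ← rep_mul hu hmul, mul_inv_cancel, rep_one hu h1]
  simp only [hconj]
  obtain ⟨f, rfl⟩ := Submodule.Quotient.mk_surjective _ x
  have : ∑ i ∈ Finset.range p, mulQ (c ∘ R (γ ^ i)) (ℓ + 1) (cl (ℓ + 1) f) =
      cl (ℓ + 1) (∑ i ∈ Finset.range p, mulHead (c ∘ R (γ ^ i)) f) :=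
    (map_sum (Submodule.mkQ _) _ _).symm
  rw [this]
  refine (Submodule.Quotient.eq _).2 ⟨1, one_pos, fun l hl _ => ?_⟩
  obtain ⟨y, l', rfl⟩ : ∃ y l', l = y :: l' := List.exists_cons_of_length_eq_add_one hl
  rw [Pi.sub_apply, Finset.sum_apply]
  simp only [mulHead_cons, Function.comp_apply]
  rw [← Finset.sum_mul, hc, one_mul, sub_self]

/-- An element acting with finite order `p`, in characteristic `p`, acts unipotently on the
one-dimensional top cohomology, hence trivially, so its transfer vanishes there. -/
theorem transfer_top {p : ℕ} [Fact p.Prime] [CharP k p]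
    {hu : ∀ γ, UniformContinuous (R γ)} (h1 : ∀ x, R 1 x = x)
    (hmul : ∀ γ γ' x, R (γ * γ') x = R γ (R γ' x)) {n : ℕ}
    (hX : SphereLike k (Set.univ : Set X) (n + 1)) {γ : Γ} (hγ : γ ^ p = 1)
    (x : AS k X (n + 1)) (hx : dQ k X _ x = 0) :
    ∃ s, dQ k X n s = opB (rep k hu) p γ _ x := by
  by_cases h : ∃ y, dQ k X n y = x
  · obtain ⟨y, rfl⟩ := h
    refine ⟨opB (rep k hu) p γ _ y, ?_⟩
    simp only [opB_apply, map_sum, dQ_rep]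
  · obtain ⟨c, hc⟩ := exists_smul_dQ hX (rep k hu γ _ x) x
      (by rw [dQ_rep, hx, map_zero]) hx h
    have hpow : ∀ i : ℕ, ∃ y, dQ k X n y = rep k hu (γ ^ i) _ x - c ^ i • x := by
      intro i
      induction i with
      | zero => exact ⟨0, by rw [map_zero, pow_zero, pow_zero, rep_one hu h1, one_smul, sub_self]⟩
      | succ i ih =>
        obtain ⟨y, hy⟩ := ih
        obtain ⟨z, hz⟩ := hc
        refine ⟨rep k hu γ _ y + c ^ i • z, ?_⟩
        rw [map_add, dQ_rep, hy, map_smul, hz, map_sub, map_smul, ← rep_mul hu hmul, ← pow_succ',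
          smul_sub, smul_smul, ← pow_succ, sub_add_sub_cancel]
    have hc1 : c = 1 := by
      obtain ⟨y, hy⟩ := hpow p
      rw [hγ, rep_one hu h1] at hy
      refine frobenius_inj k p ?_
      rw [frobenius_def, map_one]
      by_contra hne
      refine h ⟨(1 - c ^ p)⁻¹ • y, ?_⟩
      have : 1 - c ^ p ≠ 0 := sub_ne_zero.2 (Ne.symm hne)
      rw [map_smul, hy, show x - c ^ p • x = (1 - c ^ p) • x by rw [sub_smul, one_smul],
        inv_smul_smul₀ this]
    choose y hy using hpow
    refine ⟨∑ i ∈ Finset.range p, y i, ?_⟩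
    rw [map_sum, opB_apply]
    simp only [hy, hc1, one_pow, one_smul, Finset.sum_sub_distrib, Finset.sum_const,
      Finset.card_range]
    rw [← Nat.cast_smul_eq_nsmul k, CharP.cast_eq_zero, zero_smul, sub_zero]

end Actions

theorem sum_indicator_shift (k : Type*) [Field k] {p : ℕ} [Fact p.Prime] (c : ZMod p) :
    ∑ i ∈ Finset.range p, (if (i : ZMod p) + c = 0 then (1 : k) else 0) = 1 := by
  have hp : NeZero p := ⟨(Fact.out : p.Prime).ne_zero⟩
  rw [Finset.sum_eq_single (-c).val]
  · rw [ZMod.natCast_zmod_val, neg_add_cancel, if_pos rfl]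
  · intro i hi hne
    refine if_neg fun h => hne ?_
    rw [← eq_neg_iff_add_eq_zero.2 h, ZMod.val_natCast_of_lt (Finset.mem_range.1 hi)]
  · intro h
    exact (h (Finset.mem_range.2 (ZMod.val_lt _))).elim

/-- There is no free action of `(ℤ/p)²` on a compact space with at most the cohomology of a sphere in
characteristic `p`. -/
theorem no_free_action {k : Type*} [Field k] {p : ℕ} [Fact p.Prime] [CharP k p] {X : Type*}
    [MetricSpace X] [CompactSpace X] [Nonempty X] {n : ℕ}
    (hX : SphereLike k (Set.univ : Set X) (n + 1))
    (R : Multiplicative (ZMod p × ZMod p) → X → X) (h1 : ∀ x, R 1 x = x)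
    (hmul : ∀ γ γ' x, R (γ * γ') x = R γ (R γ' x)) (hfree : ∀ γ x, R γ x = x → γ = 1)
    (hc : ∀ γ, Continuous (R γ)) : False := by
  have hp : NeZero p := ⟨(Fact.out : p.Prime).ne_zero⟩
  have : Finite (Multiplicative (ZMod p × ZMod p)) :=
    inferInstanceAs (Finite (ZMod p × ZMod p))
  have hu : ∀ γ, UniformContinuous (R γ) := fun γ =>
    CompactSpace.uniformContinuous_of_continuous (hc γ)
  obtain ⟨m, A, σ, hA, hσ, hloc, ε, hε, hcov⟩ := exists_cover R h1 hmul hfree hc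
  have hpow : ∀ γ : Multiplicative (ZMod p × ZMod p), γ ^ p = 1 := by
    intro γ
    apply Multiplicative.toAdd.injective
    rw [toAdd_pow, toAdd_one, ← Nat.cast_smul_eq_nsmul (ZMod p), CharP.cast_eq_zero, zero_smul]
  let ρ := rep k hu
  have ρ1 : ∀ ℓ x, ρ 1 ℓ x = x := rep_one hu h1
  have ρm : ∀ γ γ' ℓ x, ρ (γ * γ') ℓ x = ρ γ ℓ (ρ γ' ℓ x) := rep_mul hu hmul
  have ρd : ∀ γ ℓ x, dQ k X ℓ (ρ γ ℓ x) = ρ γ _ (dQ k X ℓ x) := dQ_rep hu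
  have ρc : ∀ γ γ' ℓ x, ρ γ ℓ (ρ γ' ℓ x) = ρ γ' ℓ (ρ γ ℓ x) := fun γ γ' ℓ x => by
    rw [← ρm, mul_comm, ρm]
  -- The partition of unity for `γ`, indexed by a coordinate `π` of the sheets with `π γ = 1`.
  have lift : ∀ (γ : Multiplicative (ZMod p × ZMod p)) (π : ZMod p × ZMod p →+ ZMod p),
      π γ.toAdd = 1 → ∀ S : ∀ ℓ, Submodule k (AS k X ℓ),
      (∀ γ ℓ, ∀ x ∈ S ℓ, ρ γ ℓ x ∈ S ℓ) →
      (∀ j ℓ, ∀ x ∈ S ℓ,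
        mulQ (fun y => if π (σ j y).toAdd = 0 then (1 : k) else 0) ℓ x ∈ S ℓ) →
      LiftProp (dQ k X) (opA ρ γ) (opB ρ p γ) S (Fil k A) ∧
        LiftProp (dQ k X) (opB ρ p γ) (opA ρ γ) S (Fil k A) := by
    intro γ π hπ S Sρ Se
    refine liftProp_of_partition ρ1 ρm ρd _ (fun j ℓ x => sum_conj_mulQ hu h1 hmul ?_ ℓ x) Sρ Se
      (fun γ j ℓ x => rep_mem_Fil hu hA γ j ℓ x) ?_
    · intro x
      simp only [hσ, toAdd_mul, toAdd_pow, map_add, map_nsmul, hπ, nsmul_one]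
      exact sum_indicator_shift k _
    · intro j ℓ x hx hdx
      obtain ⟨η, hη, h⟩ := hloc j
      refine dQ_mulQ_mem_Fil hη (fun y hy z hz hyz => ?_) ℓ x hx hdx
      rw [h y hy z hz hyz]
  -- The partition of unity for `γ` can be chosen invariant under `γ'`.
  have liftker : ∀ (γ γ' : Multiplicative (ZMod p × ZMod p)) (π : ZMod p × ZMod p →+ ZMod p),
      π γ.toAdd = 1 → π γ'.toAdd = 0 →
      LiftProp (dQ k X) (opA ρ γ) (opB ρ p γ) (fun ℓ => LinearMap.ker (opA ρ γ' ℓ)) (Fil k A) ∧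
        LiftProp (dQ k X) (opB ρ p γ) (opA ρ γ) (fun ℓ => LinearMap.ker (opA ρ γ' ℓ))
          (Fil k A) := by
    intro γ γ' π hπ hπ'
    refine lift γ π hπ _ ?_ ?_
    · intro g ℓ x hx
      rw [LinearMap.mem_ker, opA_apply, sub_eq_zero] at hx ⊢
      rw [ρc, hx]
    · intro j ℓ x hx
      rw [LinearMap.mem_ker, opA_apply, sub_eq_zero] at hx ⊢
      refine (rep_mulQ hu (fun y => ?_) ℓ x).trans (congrArg _ hx)
      rw [hσ, toAdd_mul, map_add, hπ', zero_add]
  let g : Multiplicative (ZMod p × ZMod p) := .ofAdd (1, 0)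
  let g' : Multiplicative (ZMod p × ZMod p) := .ofAdd (0, 1)
  have L := lift g (AddMonoidHom.fst _ _) rfl (fun _ => ⊤) (fun _ _ _ _ => trivial)
    (fun _ _ _ _ => trivial)
  have L1 := liftker g g' (AddMonoidHom.fst _ _) rfl rfl
  have L2 := liftker g' g (AddMonoidHom.snd _ _) rfl rfl
  have Ad : ∀ γ ℓ x, dQ k X ℓ (opA ρ γ ℓ x) = opA ρ γ _ (dQ k X ℓ x) := fun γ ℓ x => by
    simp only [opA_apply, map_sub, ρd]
  have Bd : ∀ γ ℓ x, dQ k X ℓ (opB ρ p γ ℓ x) = opB ρ p γ _ (dQ k X ℓ x) := fun γ ℓ x => by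
    simp only [opB_apply, map_sum, ρd]
  -- A function of zero points is a constant, on which every group element acts trivially.
  have ρ0 : ∀ γ (x : AS k X 0), ρ γ 0 x = x := by
    intro γ x
    obtain ⟨f, rfl⟩ := Submodule.Quotient.mk_surjective _ x
    refine (Submodule.Quotient.eq _).2 ⟨1, one_pos, fun l hl _ => ?_⟩
    rw [List.length_eq_zero_iff.1 hl, Pi.sub_apply, pull_apply, List.map_nil, sub_self]
  have ρu : ∀ γ, ρ γ 1 (cl 1 fun _ => 1) = cl 1 fun _ => 1 := fun γ => rfl
  have hB : ∀ γ ℓ (x : AS k X ℓ), (∀ γ, ρ γ ℓ x = x) → opB ρ p γ ℓ x = 0 := by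
    intro γ ℓ x hx
    rw [opB_apply]
    simp only [hx, Finset.sum_const, Finset.card_range]
    rw [← Nat.cast_smul_eq_nsmul k, CharP.cast_eq_zero, zero_smul]
  refine algebraic_contradiction (n := n) (dQ_dQ) (Ad g) (Bd g) (Ad g') (Bd g')
    (opA_opB ρm (hpow g)) (opB_opA ρm (hpow g)) (opA_opB ρm (hpow g')) (opB_opA ρm (hpow g'))
    ?_ ?_ ?_ (Fil_zero A) (Fil_eq_bot hε hcov) (Fil_zero A) (Fil_eq_bot hε hcov)
    L.1 L.2 L1.1 L1.2 L2.1 L2.2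
    (fun ℓ hℓ => exists_dQ hX (by omega)) (fun ℓ hℓ => exists_dQ hX (by omega))
    (transfer_top h1 hmul hX (hpow g'))
    (fun x => by rw [opA_apply, ρ0, sub_self]) (fun x => hB _ _ _ fun γ => ρ0 γ x)
    (cl 1 fun _ => 1) ?_ ?_ (by rw [opA_apply, ρu, sub_self]) (hB _ _ _ ρu)
    (by rw [opA_apply, ρu, sub_self])
  · intro ℓ x
    simp only [opA_apply, map_sub, ρc g g']
    abel
  · intro ℓ x
    simp only [opA_apply, opB_apply, map_sub, map_sum, ρc g, Finset.sum_sub_distrib]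
  · intro ℓ x
    simp only [opB_apply, map_sum]
    rw [Finset.sum_comm]
    simp only [ρc (g ^ _)]
  · intro h
    obtain ⟨η, hη, h⟩ := cl_eq_zero.1 h
    obtain ⟨x⟩ := ‹Nonempty X›
    exact one_ne_zero (h [x] rfl ⟨fun _ _ => trivial, by simpa using hη⟩)
  · rw [dQ_cl, cl_eq_zero]
    refine ⟨1, one_pos, fun l hl _ => ?_⟩
    obtain ⟨x, y, rfl⟩ := List.length_eq_two.1 hl
    simp [d_cons]

end FreeAction

/-- The elementary abelian group `(ℤ/p) × (ℤ/p)` admits no free continuous action on any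
sphere `Sⁿ`. -/
theorem no_free_action_of_elementary_abelian (p : ℕ) (hp : p.Prime) (n : ℕ) :
    ¬ ∃ ρ : Multiplicative (ZMod p × ZMod p) →*
        (Metric.sphere (0 : EuclideanSpace ℝ (Fin (n + 1))) 1 ≃ₜ
          Metric.sphere (0 : EuclideanSpace ℝ (Fin (n + 1))) 1),
      ∀ g : Multiplicative (ZMod p × ZMod p), g ≠ 1 →
        ∀ x : Metric.sphere (0 : EuclideanSpace ℝ (Fin (n + 1))) 1, ρ g x ≠ x := by
  rintro ⟨ρ, hρ⟩
  have : Fact p.Prime := ⟨hp⟩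
  have : Nonempty (Metric.sphere (0 : EuclideanSpace ℝ (Fin (n + 1))) 1) :=
    (NormedSpace.sphere_nonempty.2 zero_le_one).to_subtype
  exact FreeAction.no_free_action (FreeAction.sphereLike_sphere (ZMod p) n) (fun γ => ρ γ)
    (fun x => by rw [map_one]; rfl) (fun γ γ' x => by rw [map_mul]; rfl)
    (fun γ x h => by_contra fun hne => hρ γ hne x h) (fun γ => (ρ γ).continuous)
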